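/- arXiv:2604.04755 — 10 statements merged into one kernel-verified Lean document; each statement's English description precedes it below -/
import Mathlib

section
/- Let K ≥ 1 be an integer and let S_1,…,S_K : {1,2,…} → ℝ be real sequences. Fix a_k > 0 and μ_k > 0 for each k ∈ {1,…,K}, and ε ∈ (0,1). Define T := inf{n ≥ 1 : S_k(n) ≥ a_k for all k ∈ {1,…,K}} (with T := ∞ if no such n exists) and, for each k, V_k := sup{n ≥ 1 : S_k(n)/n ≤ μ_k(1−ε)} + 1 (with the convention that the supremum of the empty set is 0, so V_k ≥ 1, and V_k := ∞ if the set is unbounded). Then, as elements of [0,∞], T ≤ (max_{1≤k≤K} a_k/μ_k)/(1−ε) + max_{1≤k≤K} V_k. -/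
open scoped ENNReal BigOperators

/-- Deterministic bound: the first time `T` at which all sequences `S k` are
simultaneously above their thresholds `a k` is bounded by
`(max_k a k / μ k)/(1-ε)` plus the maximum over `k` of
`V k = sup{n ≥ 1 : S k n / n ≤ μ k (1-ε)} + 1`, everything in `[0,∞]`. -/
theorem stmt_1 (K : ℕ) (hK : 1 ≤ K) (S : Fin K → ℕ → ℝ)
    (a μ : Fin K → ℝ) (ha : ∀ k, 0 < a k) (hμ : ∀ k, 0 < μ k)
    (ε : ℝ) (hε : ε ∈ Set.Ioo (0 : ℝ) 1) :
    let T : ℝ≥0∞ :=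
      sInf {t : ℝ≥0∞ | ∃ n : ℕ, 1 ≤ n ∧ t = n ∧ ∀ k, a k ≤ S k n}
    let V : Fin K → ℝ≥0∞ := fun k =>
      sSup {t : ℝ≥0∞ | ∃ n : ℕ, 1 ≤ n ∧ t = n ∧ S k n / n ≤ μ k * (1 - ε)} + 1
    T ≤ ENNReal.ofReal ((⨆ k, a k / μ k) / (1 - ε)) + ⨆ k, V k := by
  intro T V
  obtain ⟨hε0, hε1⟩ := hε
  have h1 : 0 < 1 - ε := by linarith
  have k0 : Fin K := ⟨0, hK⟩
  set c : ℝ := (⨆ k, a k / μ k) / (1 - ε) with hc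
  have hle : ∀ k, a k / μ k ≤ c * (1 - ε) := by
    intro k
    rw [hc, div_mul_cancel₀ _ h1.ne']
    exact le_ciSup (f := fun k => a k / μ k) (Set.finite_range _).bddAbove k
  have hc0 : 0 < c := by
    have h2 := hle k0
    have h3 : 0 < a k0 / μ k0 := div_pos (ha k0) (hμ k0)
    by_contra h
    nlinarith
  by_cases hX : (⨆ k, V k) = ⊤
  · rw [hX]; simp
  obtain ⟨x, hx⟩ : ∃ x, x = (⨆ k, V k).toReal := ⟨_, rfl⟩
  have hx0 : 0 ≤ x := hx ▸ ENNReal.toReal_nonneg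
  have hXx : (⨆ k, V k) = ENNReal.ofReal x := by rw [hx, ENNReal.ofReal_toReal hX]
  have hx1 : 1 ≤ x := by
    have h : (1 : ℝ≥0∞) ≤ ⨆ k, V k := le_trans (le_add_self : (1 : ℝ≥0∞) ≤ V k0) (le_iSup V k0)
    rw [hXx] at h
    exact ENNReal.one_le_ofReal.mp h
  have hn1 := Nat.lt_floor_add_one (c + x)
  have hn2 : ((⌊c + x⌋₊ : ℕ) : ℝ) ≤ c + x := Nat.floor_le (by linarith)
  generalize ⌊c + x⌋₊ = n at hn1 hn2
  have hnc : c < n := by linarith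
  have hnpos : (0 : ℝ) < n := by linarith
  have hn : 1 ≤ n := by exact_mod_cast hnpos
  have hT : T ≤ (n : ℝ≥0∞) := by
    refine sInf_le ⟨n, hn, rfl, fun k => ?_⟩
    have hS : μ k * (1 - ε) < S k n / n := by
      by_contra hcon
      push Not at hcon
      have hV : (n : ℝ≥0∞) + 1 ≤ V k :=
        add_le_add (le_sSup ⟨n, hn, rfl, hcon⟩) le_rfl
      have h := hV.trans (le_iSup V k)
      rw [hXx] at h
      have h' : ((n + 1 : ℕ) : ℝ≥0∞) ≤ ENNReal.ofReal x := by exact_mod_cast h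
      rw [← ENNReal.ofReal_natCast, ENNReal.ofReal_le_ofReal_iff hx0] at h'
      push_cast at h'
      linarith
    rw [lt_div_iff₀ hnpos] at hS
    have h4 := hle k
    rw [div_le_iff₀ (hμ k)] at h4
    have h5 : 0 < μ k * (1 - ε) := mul_pos (hμ k) h1
    nlinarith
  refine hT.trans ?_
  rw [hXx, ← ENNReal.ofReal_add hc0.le hx0, ← ENNReal.ofReal_natCast]
  exact ENNReal.ofReal_le_ofReal hn2
end

section
/- Let ν be a σ-finite measure on a measurable space and let f and g be two ν-a.e. strictly positive probability densities with respect to ν such that I := ∫ g log(g/f) dν ∈ (0,∞). Let (X_n)_{n≥1} be i.i.d. random variables whose common distribution has density g with respect to ν, and set λ(n) := ∑_{m=1}^n log(g(X_m)/f(X_m)). Then for every real x < I, the random variable L := sup{n ≥ 1 : λ(n) ≤ n x} (with L := 0 if no such n exists) is almost surely finite and satisfies E[L^r] < ∞ for every real r ≥ 1. -/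
open MeasureTheory ProbabilityTheory
open scoped ENNReal BigOperators

lemma exp_conv_aux (θ y : ℝ) (h0 : 0 ≤ θ) (h1 : θ ≤ 1) :
    Real.exp (-θ * y) ≤ θ * Real.exp (-y) + (1 - θ) := by
  have h := convexOn_exp.2 (Set.mem_univ (-y)) (Set.mem_univ (0:ℝ)) h0
    (sub_nonneg.2 h1) (by ring)
  simp only [smul_eq_mul, mul_zero, add_zero, Real.exp_zero, mul_one] at h
  have e : -θ * y = θ * -y := by ring
  rw [e]; exact h

lemma exists_theta_aux {E : Type*} [MeasurableSpace E] (μ : Measure E) [IsProbabilityMeasure μ]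
    (φ : E → ℝ) (hφ : Measurable φ) (hint : Integrable φ μ)
    (hexp : Integrable (fun t => Real.exp (-φ t)) μ) (x : ℝ) (hx : x < ∫ t, φ t ∂μ) :
    ∃ θ : ℝ, 0 < θ ∧ Integrable (fun t => Real.exp (-θ * φ t)) μ ∧
      Real.exp (θ * x) * mgf φ μ (-θ) < 1 := by
  set θ : ℕ → ℝ := fun n => 1 / ((n : ℝ) + 1) with hθ
  have hpos : ∀ n, 0 < θ n := fun n => by simp only [hθ]; positivity
  have hle : ∀ n, θ n ≤ 1 := fun n => by
    simp only [hθ]; rw [div_le_one (by positivity)]; linarith [(Nat.cast_nonneg n : (0:ℝ) ≤ n)]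
  have hI : ∀ n, Integrable (fun t => Real.exp (-θ n * φ t)) μ := by
    intro n
    refine Integrable.mono' ((hexp.const_mul (θ n)).add (integrable_const (1 - θ n)))
      (by fun_prop) (Filter.Eventually.of_forall fun t => ?_)
    rw [Real.norm_eq_abs, Real.abs_exp]
    exact exp_conv_aux _ _ (hpos n).le (hle n)
  have hlim : Filter.Tendsto (fun n => ∫ t, (θ n)⁻¹ * (Real.exp (-θ n * φ t) - 1) ∂μ)
      Filter.atTop (nhds (∫ t, -φ t ∂μ)) := by
    refine tendsto_integral_of_dominated_convergence
      (fun t => |φ t| + (Real.exp (-φ t) + 1)) (fun n => by fun_prop)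
      (hint.abs.add (hexp.add (integrable_const 1)))
      (fun n => Filter.Eventually.of_forall fun t => ?_)
      (Filter.Eventually.of_forall fun t => ?_)
    · have h1 := exp_conv_aux (θ n) (φ t) (hpos n).le (hle n)
      have h2 := Real.add_one_le_exp (-θ n * φ t)
      have h3 := Real.exp_pos (-φ t)
      rw [Real.norm_eq_abs, abs_le]
      constructor
      · have : -φ t ≤ (θ n)⁻¹ * (Real.exp (-θ n * φ t) - 1) := by
          rw [inv_mul_eq_div, le_div_iff₀ (hpos n)]; linarith
        linarith [le_abs_self (φ t)]
      · have : (θ n)⁻¹ * (Real.exp (-θ n * φ t) - 1) ≤ Real.exp (-φ t) - 1 := by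
          rw [inv_mul_eq_div, div_le_iff₀ (hpos n)]; linarith
        linarith [abs_nonneg (φ t)]
    · have hd : HasDerivAt (fun s : ℝ => Real.exp (-s * φ t)) (-φ t) 0 := by
        have h := (((hasDerivAt_id (0:ℝ)).neg).mul_const (φ t)).exp
        simpa using h
      have h := hd.tendsto_slope_zero_right
      have hθ0 : Filter.Tendsto θ Filter.atTop (nhdsWithin 0 (Set.Ioi 0)) :=
        tendsto_nhdsWithin_iff.2 ⟨tendsto_one_div_add_atTop_nhds_zero_nat,
          Filter.Eventually.of_forall hpos⟩
      have h' := h.comp hθ0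
      simpa [Function.comp_def] using h'
  have hx' : ∫ t, -φ t ∂μ < -x := by rw [integral_neg]; linarith
  obtain ⟨n, hn⟩ := (hlim.eventually_lt_const hx').exists
  refine ⟨θ n, hpos n, hI n, ?_⟩
  rw [integral_const_mul, integral_sub (hI n) (integrable_const 1)] at hn
  simp only [integral_const, probReal_univ, smul_eq_mul, mul_one] at hn
  rw [inv_mul_eq_div, div_lt_iff₀ (hpos n)] at hn
  have h2 := Real.add_one_le_exp (-(θ n * x))
  have h3 : mgf φ μ (-θ n) < Real.exp (-(θ n * x)) := by
    unfold mgf; linarith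
  calc Real.exp (θ n * x) * mgf φ μ (-θ n)
      < Real.exp (θ n * x) * Real.exp (-(θ n * x)) :=
        mul_lt_mul_of_pos_left h3 (Real.exp_pos _)
    _ = 1 := by rw [← Real.exp_add]; simp

lemma tsum_aux {Ω : Type*} [MeasurableSpace Ω] (P : Measure Ω) [IsProbabilityMeasure P]
    (A : ℕ → Set Ω) (hA : ∀ n, MeasurableSet (A n)) (ρ : ℝ) (h0 : 0 ≤ ρ) (h1 : ρ < 1)
    (hP : ∀ n, P.real (A n) ≤ ρ ^ n) (r : ℝ) (hr : 1 ≤ r) :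
    ∫⁻ ω, ∑' n : ℕ, (A n).indicator (fun _ => (n : ℝ≥0∞) ^ r) ω ∂P < ⊤ := by
  rw [lintegral_tsum (fun n => (measurable_const.indicator (hA n)).aemeasurable)]
  obtain ⟨k, hk⟩ := exists_nat_ge r
  have hs : Summable fun n : ℕ => (n : ℝ) ^ k * ρ ^ n :=
    summable_pow_mul_geometric_of_norm_lt_one k (by rwa [Real.norm_eq_abs, abs_of_nonneg h0])
  refine lt_of_le_of_lt (ENNReal.tsum_le_tsum (g := fun n : ℕ =>
    ENNReal.ofReal ((n : ℝ) ^ k * ρ ^ n)) fun n => ?_) hs.tsum_ofReal_lt_top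
  rw [lintegral_indicator_const (hA n), ENNReal.ofReal_mul (by positivity)]
  refine mul_le_mul' ?_ ?_
  · rw [ENNReal.ofReal_pow (by positivity), ENNReal.ofReal_natCast, ← ENNReal.rpow_natCast]
    rcases Nat.eq_zero_or_pos n with rfl | hn
    · rw [Nat.cast_zero, ENNReal.zero_rpow_of_pos (by linarith)]; simp
    · exact ENNReal.rpow_le_rpow_of_exponent_le (by exact_mod_cast hn) hk
  · rw [← ofReal_measureReal]
    exact ENNReal.ofReal_le_ofReal (hP n)

lemma integrable_of_integral_one_aux {E : Type*} [MeasurableSpace E] {ν : Measure E} {f : E → ℝ}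
    (h : ∫ t, f t ∂ν = 1) : Integrable f ν := by
  by_contra hc
  rw [integral_undef hc] at h
  exact zero_ne_one h

/-- If `(X n)` are i.i.d. with density `g` with respect to `ν` and
`I = ∫ g log(g/f) dν ∈ (0,∞)`, then for every `x < I` the last time
`L = sup{n ≥ 1 : λ(n) ≤ n x}` (with `L = 0` if no such `n` exists) is
almost surely finite and has finite moments of every order `r ≥ 1`. -/
theorem stmt_3
    {Ω : Type*} [MeasurableSpace Ω] (P : Measure Ω) [IsProbabilityMeasure P]
    {E : Type*} [mE : MeasurableSpace E] (ν : Measure E) [SigmaFinite ν]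
    (f g : E → ℝ) (hf : Measurable f) (hg : Measurable g)
    (hfpos : ∀ᵐ t ∂ν, 0 < f t) (hgpos : ∀ᵐ t ∂ν, 0 < g t)
    (hfprob : ∫ t, f t ∂ν = 1) (hgprob : ∫ t, g t ∂ν = 1)
    (hI_int : Integrable (fun t => g t * Real.log (g t / f t)) ν)
    (hI_pos : 0 < ∫ t, g t * Real.log (g t / f t) ∂ν)
    (X : ℕ → Ω → E) (hX : ∀ n, Measurable (X n))
    (hindep : iIndepFun X P)
    (hdist : ∀ n, P.map (X n) = ν.withDensity fun t => ENNReal.ofReal (g t))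
    (x : ℝ) (hx : x < ∫ t, g t * Real.log (g t / f t) ∂ν) :
    let L : Ω → ℝ≥0∞ := fun ω =>
      sSup {t : ℝ≥0∞ | ∃ n : ℕ, 1 ≤ n ∧ t = n ∧
        ∑ m ∈ Finset.range n, Real.log (g (X m ω) / f (X m ω)) ≤ n * x}
    (∀ᵐ ω ∂P, L ω < ⊤) ∧ ∀ r : ℝ, 1 ≤ r → ∫⁻ ω, L ω ^ r ∂P < ⊤ := by
  intro L
  set φ : E → ℝ := fun t => Real.log (g t / f t) with hφd
  have hφ : Measurable φ := Real.measurable_log.comp (hg.div hf)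
  set μ : Measure E := ν.withDensity fun t => ENNReal.ofReal (g t) with hμ
  have hμP : IsProbabilityMeasure μ := by
    rw [← hdist 0]; exact Measure.isProbabilityMeasure_map (hX 0).aemeasurable
  have hgm : Measurable fun t => ENNReal.ofReal (g t) := hg.ennreal_ofReal
  have htop : ∀ᵐ t ∂ν, ENNReal.ofReal (g t) < ⊤ :=
    Filter.Eventually.of_forall fun t => ENNReal.ofReal_lt_top
  have hint : Integrable φ μ := by
    rw [hμ, integrable_withDensity_iff hgm htop]
    refine hI_int.congr ?_
    filter_upwards [hgpos] with t ht
    rw [ENNReal.toReal_ofReal ht.le, mul_comm]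
  have hmean : ∫ t, φ t ∂μ = ∫ t, g t * Real.log (g t / f t) ∂ν := by
    rw [hμ, integral_withDensity_eq_integral_toReal_smul hgm htop]
    refine integral_congr_ae ?_
    filter_upwards [hgpos] with t ht
    rw [ENNReal.toReal_ofReal ht.le, smul_eq_mul]
  have hexp : Integrable (fun t => Real.exp (-φ t)) μ := by
    rw [hμ, integrable_withDensity_iff hgm htop]
    refine (integrable_of_integral_one_aux hfprob).congr ?_
    filter_upwards [hgpos, hfpos] with t ht hft
    rw [ENNReal.toReal_ofReal ht.le, Real.exp_neg, Real.exp_log (div_pos ht hft)]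
    field_simp
  obtain ⟨θ, hθ, hθI, hθρ⟩ := exists_theta_aux μ φ hφ hint hexp x (by rw [hmean]; exact hx)
  set ρ := Real.exp (θ * x) * mgf φ μ (-θ) with hρ
  have hρ0 : 0 ≤ ρ := mul_nonneg (Real.exp_pos _).le mgf_nonneg
  have hYm : ∀ m, Measurable (φ ∘ X m) := fun m => hφ.comp (hX m)
  have hYi : iIndepFun (fun m => φ ∘ X m) P := hindep.comp (fun _ => φ) (fun _ => hφ)
  have hYmgf : ∀ m, mgf (φ ∘ X m) P (-θ) = mgf φ μ (-θ) := by
    intro m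
    rw [← hdist m, mgf_map (hX m).aemeasurable (by fun_prop)]
  have hYI : ∀ m, Integrable (fun ω => Real.exp (-θ * (φ ∘ X m) ω)) P := by
    intro m
    have h := hθI
    rw [← hdist m] at h
    exact h.comp_measurable (hX m)
  set A : ℕ → Set Ω := fun n => {ω | (∑ m ∈ Finset.range n, φ ∘ X m) ω ≤ n * x} with hAd
  have hA : ∀ n, MeasurableSet (A n) := fun n =>
    measurableSet_le (by
      have h := Finset.measurable_sum (Finset.range n) fun m _ => hYm m
      convert h using 1
      ext ω
      simp) measurable_const
  have hPA : ∀ n, P.real (A n) ≤ ρ ^ n := by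
    intro n
    have h := measure_le_le_exp_mul_mgf (μ := P) (X := ∑ m ∈ Finset.range n, φ ∘ X m)
      (t := -θ) (n * x) (by linarith)
      (hYi.integrable_exp_mul_sum hYm (fun m _ => hYI m))
    rw [hYi.mgf_sum hYm, Finset.prod_congr rfl (fun m _ => hYmgf m), Finset.prod_const,
      Finset.card_range] at h
    refine h.trans (le_of_eq ?_)
    rw [hρ, mul_pow, ← Real.exp_nat_mul]
    congr 2
    ring
  have hL : ∀ r : ℝ, 1 ≤ r → ∀ ω,
      L ω ^ r ≤ ∑' n : ℕ, (A n).indicator (fun _ => (n : ℝ≥0∞) ^ r) ω := by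
    intro r hr ω
    have hr0 : 0 < r := by linarith
    rw [← ENNReal.le_rpow_inv_iff hr0]
    refine sSup_le ?_
    rintro t ⟨n, _, rfl, hn⟩
    rw [ENNReal.le_rpow_inv_iff hr0]
    refine le_trans ?_ (ENNReal.le_tsum n)
    have hmem : ω ∈ A n := by
      simp only [hAd, Set.mem_setOf_eq, Finset.sum_apply]
      exact hn
    rw [Set.indicator_of_mem hmem]
  refine ⟨?_, fun r hr => (lintegral_mono (hL r hr)).trans_lt
    (tsum_aux P A hA ρ hρ0 hθρ hPA r hr)⟩
  have hfin := tsum_aux P A hA ρ hρ0 hθρ hPA 1 le_rfl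
  have hae := ae_lt_top (Measurable.ennreal_tsum fun n =>
    (measurable_const.indicator (hA n))) hfin.ne
  filter_upwards [hae] with ω hω
  have h := (hL 1 le_rfl ω).trans_lt hω
  rwa [ENNReal.rpow_one] at h
end

section
/- Let ν be a σ-finite measure on a measurable space and let f and g be two ν-a.e. strictly positive probability densities with respect to ν such that I := ∫ g log(g/f) dν ∈ (0,∞). Define ψ(x) := sup_{θ ≤ 0} { θx − log ∫ g^{1+θ} f^{−θ} dν } for x ∈ ℝ, taking values in [0,∞]. Then ψ is nonnegative and convex, ψ(I) = 0, and ψ(x) > 0 for every real x < I. -/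
open MeasureTheory
open scoped ENNReal BigOperators

/-- Properties of the large deviation rate function
`ψ(x) = sup_{θ ≤ 0} (θ x - log ∫ g^{1+θ} f^{-θ} dν)`, viewed as an
extended-real-valued function: it is nonnegative, convex (in the extended-real
sense), vanishes at `I = ∫ g log(g/f) dν`, and is strictly positive for `x < I`. -/
theorem stmt_4
    {E : Type*} [MeasurableSpace E] (ν : Measure E) [SigmaFinite ν]
    (f g : E → ℝ) (hf : Measurable f) (hg : Measurable g)
    (hfpos : ∀ᵐ t ∂ν, 0 < f t) (hgpos : ∀ᵐ t ∂ν, 0 < g t)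
    (hfprob : ∫ t, f t ∂ν = 1) (hgprob : ∫ t, g t ∂ν = 1)
    (hI_int : Integrable (fun t => g t * Real.log (g t / f t)) ν)
    (hI_pos : 0 < ∫ t, g t * Real.log (g t / f t) ∂ν) :
    let ψ : ℝ → EReal := fun x =>
      ⨆ θ ∈ Set.Iic (0 : ℝ),
        ((θ * x - Real.log (∫ t, g t ^ (1 + θ) * f t ^ (-θ) ∂ν) : ℝ) : EReal)
    (∀ x : ℝ, 0 ≤ ψ x) ∧
    (∀ x y a b : ℝ, 0 ≤ a → 0 ≤ b → a + b = 1 →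
      ψ (a * x + b * y) ≤ (a : EReal) * ψ x + (b : EReal) * ψ y) ∧
    ψ (∫ t, g t * Real.log (g t / f t) ∂ν) = 0 ∧
    (∀ x : ℝ, x < ∫ t, g t * Real.log (g t / f t) ∂ν → 0 < ψ x) := by
  intro ψ
  set I := ∫ t, g t * Real.log (g t / f t) ∂ν with hI
  have hfi : Integrable f ν := by
    by_contra h
    rw [integral_undef h] at hfprob
    exact zero_ne_one hfprob
  have hgi : Integrable g ν := by
    by_contra h
    rw [integral_undef h] at hgprob
    exact zero_ne_one hgprob
  have hrep : ∀ θ : ℝ, ∀ᵐ t ∂ν,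
      g t ^ (1 + θ) * f t ^ (-θ) = g t * Real.exp (θ * Real.log (g t / f t)) := by
    intro θ
    filter_upwards [hfpos, hgpos] with t h1 h2
    rw [Real.rpow_add h2, Real.rpow_one, Real.rpow_def_of_pos h2, Real.rpow_def_of_pos h1,
      Real.log_div h2.ne' h1.ne', mul_assoc, ← Real.exp_add]
    congr 2
    ring
  have h0 : ∀ x : ℝ, 0 ≤ ψ x := by
    intro x
    refine le_trans ?_ (le_iSup₂ (f := fun (θ : ℝ) (_ : θ ∈ Set.Iic (0 : ℝ)) =>
      ((θ * x - Real.log (∫ t, g t ^ (1 + θ) * f t ^ (-θ) ∂ν) : ℝ) : EReal)) 0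
      (Set.mem_Iic.2 le_rfl))
    simp [hgprob]
  refine ⟨h0, ?_, ?_, ?_⟩
  · intro x y a b ha hb hab
    refine iSup₂_le fun θ hθ => ?_
    have e : θ * (a * x + b * y) - Real.log (∫ t, g t ^ (1 + θ) * f t ^ (-θ) ∂ν)
        = a * (θ * x - Real.log (∫ t, g t ^ (1 + θ) * f t ^ (-θ) ∂ν))
        + b * (θ * y - Real.log (∫ t, g t ^ (1 + θ) * f t ^ (-θ) ∂ν)) := by
      linear_combination (Real.log (∫ t, g t ^ (1 + θ) * f t ^ (-θ) ∂ν)) * hab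
    rw [e, EReal.coe_add, EReal.coe_mul a, EReal.coe_mul b]
    have k : ∀ z : ℝ, ((θ * z - Real.log (∫ t, g t ^ (1 + θ) * f t ^ (-θ) ∂ν) : ℝ) : EReal)
        ≤ ψ z := fun z => le_iSup₂ (f := fun (θ : ℝ) (_ : θ ∈ Set.Iic (0 : ℝ)) =>
      ((θ * z - Real.log (∫ t, g t ^ (1 + θ) * f t ^ (-θ) ∂ν) : ℝ) : EReal)) θ hθ
    exact add_le_add (mul_le_mul_of_nonneg_left (k x) (EReal.coe_nonneg.2 ha))
      (mul_le_mul_of_nonneg_left (k y) (EReal.coe_nonneg.2 hb))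
  · refine le_antisymm (iSup₂_le fun θ hθ => ?_) (h0 _)
    have hθ' : θ ≤ 0 := hθ
    rw [← EReal.coe_zero, EReal.coe_le_coe_iff, sub_nonpos]
    set M := ∫ t, g t ^ (1 + θ) * f t ^ (-θ) ∂ν with hM
    have hM0 : 0 ≤ M := by
      refine integral_nonneg_of_ae ?_
      filter_upwards [hfpos, hgpos] with t h1 h2
      simp only [Pi.zero_apply]
      positivity
    rcases hM0.eq_or_lt with h | hMp
    · rw [← h, Real.log_zero]
      exact mul_nonpos_of_nonpos_of_nonneg hθ' hI_pos.le
    · have hMi : Integrable (fun t => g t ^ (1 + θ) * f t ^ (-θ)) ν := by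
        by_contra h
        rw [hM, integral_undef h] at hMp
        exact lt_irrefl _ hMp
      have hle : ∫ t, ((1 - Real.log M) * g t + θ * (g t * Real.log (g t / f t))) ∂ν
          ≤ ∫ t, M⁻¹ * (g t ^ (1 + θ) * f t ^ (-θ)) ∂ν := by
        refine integral_mono_ae ((hgi.const_mul _).add (hI_int.const_mul _))
          (hMi.const_mul _) ?_
        filter_upwards [hrep θ, hgpos] with t h1 h2
        simp only [h1]
        have h3 := Real.add_one_le_exp (θ * Real.log (g t / f t) - Real.log M)
        rw [Real.exp_sub, Real.exp_log hMp] at h3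
        have h4 := mul_le_mul_of_nonneg_left h3 h2.le
        calc _ = g t * (θ * Real.log (g t / f t) - Real.log M + 1) := by ring
          _ ≤ _ := h4
          _ = _ := by ring
      rw [integral_add (hgi.const_mul _) (hI_int.const_mul _), integral_const_mul,
        integral_const_mul, integral_const_mul, hgprob, ← hM, ← hI,
        inv_mul_cancel₀ hMp.ne'] at hle
      linarith
  · intro x hx
    let s : ℕ → ℝ := fun n => 1 / ((n : ℝ) + 1)
    have hs0 : ∀ n, 0 < s n := fun n => by positivity
    have hs1 : ∀ n, s n ≤ 1 := fun n => by
      simp only [s]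
      rw [div_le_one (by positivity)]
      have : (0 : ℝ) ≤ n := Nat.cast_nonneg n
      linarith
    have hst : Filter.Tendsto s Filter.atTop (nhds 0) := tendsto_one_div_add_atTop_nhds_zero_nat
    have young : ∀ n, ∀ᵐ t ∂ν, g t ^ (1 + -s n) * f t ^ (- -s n)
        ≤ (1 - s n) * g t + s n * f t := by
      intro n
      filter_upwards [hfpos, hgpos] with t h1 h2
      rw [neg_neg, ← sub_eq_add_neg]
      exact Real.geom_mean_le_arith_mean2_weighted (by linarith [hs1 n]) (hs0 n).le h2.le h1.le
        (by ring)
    have hmeas : ∀ n, Measurable (fun t => g t ^ (1 + -s n) * f t ^ (- -s n)) := fun n =>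
      (hg.pow_const _).mul (hf.pow_const _)
    have hMi : ∀ n, Integrable (fun t => g t ^ (1 + -s n) * f t ^ (- -s n)) ν := by
      intro n
      refine ((hgi.const_mul (1 - s n)).add (hfi.const_mul (s n))).mono'
        (hmeas n).aestronglyMeasurable ?_
      filter_upwards [hfpos, hgpos, young n] with t h1 h2 h3
      rw [Real.norm_of_nonneg (by positivity)]
      exact h3
    have hlim : Filter.Tendsto
        (fun n => ∫ t, (g t - g t ^ (1 + -s n) * f t ^ (- -s n)) / s n ∂ν)
        Filter.atTop (nhds I) := by
      refine tendsto_integral_of_dominated_convergence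
        (fun t => |g t * Real.log (g t / f t)| + (|g t| + |f t|)) ?_ ?_ ?_ ?_
      · intro n
        exact ((hg.sub (hmeas n)).div_const _).aestronglyMeasurable
      · exact hI_int.abs.add (hgi.abs.add hfi.abs)
      · intro n
        filter_upwards [hgpos, hfpos, young n, hrep (-s n)] with t h1 h2 h3 h4
        have hsn := hs0 n
        have lo : g t - f t ≤ (g t - g t ^ (1 + -s n) * f t ^ (- -s n)) / s n := by
          rw [le_div_iff₀ hsn]
          linarith
        have hi : (g t - g t ^ (1 + -s n) * f t ^ (- -s n)) / s n
            ≤ g t * Real.log (g t / f t) := by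
          rw [div_le_iff₀ hsn, h4]
          have := mul_le_mul_of_nonneg_left
            (Real.add_one_le_exp (-s n * Real.log (g t / f t))) h1.le
          linarith
        rw [Real.norm_eq_abs, abs_le]
        have a1 := le_abs_self (g t * Real.log (g t / f t))
        have a2 := abs_nonneg (g t * Real.log (g t / f t))
        rw [abs_of_pos h1, abs_of_pos h2]
        constructor <;> linarith
      · filter_upwards [ae_all_iff.2 fun n => hrep (-s n)] with t h1
        simp only [h1]
        set L := Real.log (g t / f t)
        have hd : HasDerivAt (fun u : ℝ => -(g t * Real.exp (-u * L))) (g t * L) 0 := by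
          have := ((((hasDerivAt_id (0 : ℝ)).neg.mul_const L).exp).const_mul (g t)).neg
          refine (this.congr_deriv ?_).congr_of_eventuallyEq ?_
          · simp
          · exact Filter.Eventually.of_forall fun u => by simp
        have ht := hd.tendsto_slope_zero.comp
          (tendsto_nhdsWithin_iff.2 ⟨hst, Filter.Eventually.of_forall fun n => (hs0 n).ne'⟩)
        refine ht.congr fun n => ?_
        simp
        ring
    obtain ⟨n, hn⟩ := (hlim.eventually (lt_mem_nhds hx)).exists
    rw [integral_div, integral_sub hgi (hMi n), hgprob, lt_div_iff₀ (hs0 n)] at hn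
    refine lt_of_lt_of_le ?_ (le_iSup₂ (f := fun (θ : ℝ) (_ : θ ∈ Set.Iic (0 : ℝ)) =>
      ((θ * x - Real.log (∫ t, g t ^ (1 + θ) * f t ^ (-θ) ∂ν) : ℝ) : EReal)) (-s n)
      (Set.mem_Iic.2 (by linarith [hs0 n])))
    rw [← EReal.coe_zero, EReal.coe_lt_coe_iff]
    set M := ∫ t, g t ^ (1 + -s n) * f t ^ (- -s n) ∂ν with hM
    have hMp : 0 < M := by
      have hnn : 0 ≤ᵐ[ν] fun t => g t ^ (1 + -s n) * f t ^ (- -s n) := by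
        filter_upwards [hfpos, hgpos] with t h1 h2
        simp only [Pi.zero_apply]
        positivity
      refine lt_of_le_of_ne (integral_nonneg_of_ae hnn) fun h => ?_
      have hz := (integral_eq_zero_iff_of_nonneg_ae hnn (hMi n)).1 h.symm
      have hg0 : g =ᵐ[ν] 0 := by
        filter_upwards [hz, hfpos, hgpos] with t h1 h2 h3
        have : 0 < g t ^ (1 + -s n) * f t ^ (- -s n) := by positivity
        exact absurd h1 this.ne'
      rw [integral_congr_ae hg0] at hgprob
      simp at hgprob
    have := Real.log_le_sub_one_of_pos hMp
    linarith
end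

section
/- Let ν be a σ-finite measure on a measurable space and let f and g be two ν-a.e. strictly positive probability densities with respect to ν, and set I := ∫ g log(g/f) dν and J := ∫ f log(f/g) dν. Let (X_n)_{n≥1} be i.i.d. random variables, set λ(n) := ∑_{m=1}^n log(g(X_m)/f(X_m)), and for thresholds a, b > 0 define the SPRT stopping time T := inf{n ≥ 1 : λ(n) ∉ (−b, a)}. If I ∈ (0,∞), then T is almost surely finite when the common density of the X_n is g; if J ∈ (0,∞), then T is almost surely finite when the common density of the X_n is f. -/
open MeasureTheory ProbabilityTheory
open scoped ENNReal BigOperators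

lemma sprt_aux {Ω : Type*} [MeasurableSpace Ω] (P : Measure Ω) [IsProbabilityMeasure P]
    {E : Type*} [mE : MeasurableSpace E] (ν : Measure E)
    (g h : E → ℝ) (hg : Measurable g) (hh : Measurable h)
    (hgpos : ∀ᵐ t ∂ν, 0 < g t)
    (X : ℕ → Ω → E) (hX : ∀ n, Measurable (X n))
    (hindep : iIndepFun (m := fun _ => mE) X P)
    (hdist : ∀ n, P.map (X n) = ν.withDensity fun t => ENNReal.ofReal (g t))
    (hint : Integrable (fun t => g t * h t) ν) (hpos : 0 < ∫ t, g t * h t ∂ν) (c : ℝ) :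
    ∀ᵐ ω ∂P, ∃ n : ℕ, 1 ≤ n ∧ c ≤ ∑ m ∈ Finset.range n, h (X m ω) := by
  have hae : (fun t => (ENNReal.ofReal (g t)).toReal • h t) =ᵐ[ν] fun t => g t * h t := by
    filter_upwards [hgpos] with t ht
    simp [ENNReal.toReal_ofReal ht.le]
  have h1 : Integrable h (P.map (X 0)) := by
    rw [hdist, integrable_withDensity_iff_integrable_smul' hg.ennreal_ofReal (by simp)]
    exact hint.congr hae.symm
  have h2 : ∫ t, h t ∂(P.map (X 0)) = ∫ t, g t * h t ∂ν := by
    rw [hdist, integral_withDensity_eq_integral_toReal_smul hg.ennreal_ofReal (by simp)]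
    exact integral_congr_ae hae
  have h3 : Integrable (fun ω => h (X 0 ω)) P := h1.comp_measurable (hX 0)
  have h4 : ∫ ω, h (X 0 ω) ∂P = ∫ t, g t * h t ∂ν := by
    rw [← h2, integral_map (hX 0).aemeasurable hh.aestronglyMeasurable]
  have key := strong_law_ae_real (fun n ω => h (X n ω)) h3
    (fun i j hij => (hindep.indepFun hij).comp hh hh)
    (fun i => (IdentDistrib.mk (hX i).aemeasurable (hX 0).aemeasurable
      (by rw [hdist, hdist])).comp hh)
  filter_upwards [key] with ω hω
  rw [h4] at hω
  have ht := hω.pos_mul_atTop hpos (tendsto_natCast_atTop_atTop (R := ℝ))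
  obtain ⟨n, hn, hn1⟩ := ((ht.eventually_ge_atTop c).and (Filter.eventually_ge_atTop 1)).exists
  refine ⟨n, hn1, ?_⟩
  have : (n : ℝ) ≠ 0 := by positivity
  rwa [div_mul_cancel₀ _ this] at hn

/-- Almost sure finiteness of the SPRT stopping time
`T = inf{n ≥ 1 : λ(n) ∉ (-b, a)}`: if `I = ∫ g log(g/f) dν ∈ (0,∞)` then `T` is
a.s. finite under the measure `Pg` making the `X n` i.i.d. with density `g`, and if
`J = ∫ f log(f/g) dν ∈ (0,∞)` then `T` is a.s. finite under the measure `Pf`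
making the `X n` i.i.d. with density `f`. -/
theorem stmt_5
    {Ω : Type*} [MeasurableSpace Ω] (Pf Pg : Measure Ω)
    [IsProbabilityMeasure Pf] [IsProbabilityMeasure Pg]
    {E : Type*} [mE : MeasurableSpace E] (ν : Measure E) [SigmaFinite ν]
    (f g : E → ℝ) (hf : Measurable f) (hg : Measurable g)
    (hfpos : ∀ᵐ t ∂ν, 0 < f t) (hgpos : ∀ᵐ t ∂ν, 0 < g t)
    (hfprob : ∫ t, f t ∂ν = 1) (hgprob : ∫ t, g t ∂ν = 1)
    (X : ℕ → Ω → E) (hX : ∀ n, Measurable (X n))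
    (hindep_f : iIndepFun (m := fun _ => mE) X Pf)
    (hdist_f : ∀ n, Pf.map (X n) = ν.withDensity fun t => ENNReal.ofReal (f t))
    (hindep_g : iIndepFun (m := fun _ => mE) X Pg)
    (hdist_g : ∀ n, Pg.map (X n) = ν.withDensity fun t => ENNReal.ofReal (g t))
    (a b : ℝ) (ha : 0 < a) (hb : 0 < b) :
    let lam : ℕ → Ω → ℝ := fun n ω =>
      ∑ m ∈ Finset.range n, Real.log (g (X m ω) / f (X m ω))
    ((Integrable (fun t => g t * Real.log (g t / f t)) ν ∧
        0 < ∫ t, g t * Real.log (g t / f t) ∂ν) →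
      ∀ᵐ ω ∂Pg, ∃ n : ℕ, 1 ≤ n ∧ lam n ω ∉ Set.Ioo (-b) a) ∧
    ((Integrable (fun t => f t * Real.log (f t / g t)) ν ∧
        0 < ∫ t, f t * Real.log (f t / g t) ∂ν) →
      ∀ᵐ ω ∂Pf, ∃ n : ℕ, 1 ≤ n ∧ lam n ω ∉ Set.Ioo (-b) a) := by
  intro lam
  refine ⟨fun ⟨hi, hp⟩ => ?_, fun ⟨hi, hp⟩ => ?_⟩
  · filter_upwards [sprt_aux Pg ν g (fun t => Real.log (g t / f t)) hg (hg.div hf).log hgpos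
      X hX hindep_g hdist_g hi hp a] with ω ⟨n, hn, h⟩
    exact ⟨n, hn, fun hm => absurd hm.2 (not_lt.2 h)⟩
  · filter_upwards [sprt_aux Pf ν f (fun t => Real.log (f t / g t)) hf (hf.div hg).log hfpos
      X hX hindep_f hdist_f hi hp b] with ω ⟨n, hn, h⟩
    refine ⟨n, hn, fun hm => ?_⟩
    have e : lam n ω = - ∑ m ∈ Finset.range n, Real.log (f (X m ω) / g (X m ω)) := by
      simp only [lam, ← Finset.sum_neg_distrib, ← Real.log_inv, inv_div]
    have := hm.1
    linarith
end

section
/- Let ν be a σ-finite measure on a measurable space and let f and g be two ν-a.e. strictly positive probability densities with respect to ν. Let (X_n)_{n≥1} be i.i.d. random variables, set λ(n) := ∑_{m=1}^n log(g(X_m)/f(X_m)), and for thresholds a, b > 0 define the SPRT stopping time T := inf{n ≥ 1 : λ(n) ∉ (−b, a)}. Then P_f(T < ∞ and λ(T) ≥ a) ≤ e^{−a}, and P_g(T < ∞ and λ(T) ≤ −b) ≤ e^{−b}. -/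
open MeasureTheory ProbabilityTheory
open scoped ENNReal BigOperators

/-- The random walk with increments `Z`, stopped once it reaches level `a`
at a time `≥ 1`; (as `a > 0`, the start at `0` is below the level). -/
noncomputable def stoppedWalk {Ω : Type*} (Z : ℕ → Ω → ℝ) (a : ℝ) : ℕ → Ω → ℝ
  | 0 => fun _ => 0
  | n + 1 => fun ω => stoppedWalk Z a n ω +
      Set.indicator (Set.Iio a) (fun _ => (1 : ℝ)) (stoppedWalk Z a n ω) * Z n ω

lemma stoppedWalk_meas {Ω : Type*} (Z : ℕ → Ω → ℝ) (a : ℝ) (n : ℕ)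
    (m : MeasurableSpace Ω) (h : ∀ k < n, Measurable[m] (Z k)) :
    Measurable[m] (stoppedWalk Z a n) := by
  induction n with
  | zero => exact measurable_const
  | succ n ih =>
    have h1 := ih (fun k hk => h k (by omega))
    have h2 := h n (by omega)
    have h3 : Measurable (Set.indicator (Set.Iio a) (fun _ : ℝ => (1 : ℝ))) :=
      measurable_const.indicator measurableSet_Iio
    exact h1.add ((h3.comp h1).mul h2)

lemma stoppedWalk_dich {Ω : Type*} (Z : ℕ → Ω → ℝ) (a : ℝ) (n : ℕ) (ω : Ω) :
    a ≤ stoppedWalk Z a n ω ∨ stoppedWalk Z a n ω = ∑ m ∈ Finset.range n, Z m ω := by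
  induction n with
  | zero => right; simp [stoppedWalk]
  | succ n ih =>
    by_cases h : a ≤ stoppedWalk Z a n ω
    · left
      simp [stoppedWalk, h, not_lt.mpr h]
    · right
      rcases ih with h' | h'
      · exact absurd h' h
      · rw [Finset.sum_range_succ, ← h']
        simp [stoppedWalk, not_le.mp h]

lemma stoppedWalk_mono {Ω : Type*} (Z : ℕ → Ω → ℝ) (a : ℝ) :
    Monotone (fun n => {ω | a ≤ stoppedWalk Z a n ω}) := by
  refine monotone_nat_of_le_succ fun n ω h => ?_
  simp only [Set.mem_ofPred_eq] at h ⊢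
  simp [stoppedWalk, h, not_lt.mpr h]

lemma stoppedWalk_lintegral {Ω : Type*} [mΩ : MeasurableSpace Ω] (μ : Measure Ω)
    [IsProbabilityMeasure μ] (Z : ℕ → Ω → ℝ) (hZ : ∀ n, Measurable (Z n))
    (hind : iIndepFun Z μ) (h1 : ∀ n, ∫⁻ ω, ENNReal.ofReal (Real.exp (Z n ω)) ∂μ = 1)
    (a : ℝ) (n : ℕ) :
    ∫⁻ ω, ENNReal.ofReal (Real.exp (stoppedWalk Z a n ω)) ∂μ = 1 := by
  induction n with
  | zero => simp [stoppedWalk]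
  | succ n ih =>
    set S := stoppedWalk Z a n with hS
    let m1 : MeasurableSpace Ω := ⨆ k ∈ Set.Iio n, (inferInstance : MeasurableSpace ℝ).comap (Z k)
    let m2 : MeasurableSpace Ω :=
      ⨆ k ∈ ({n} : Set ℕ), (inferInstance : MeasurableSpace ℝ).comap (Z k)
    have hle : ∀ k, (inferInstance : MeasurableSpace ℝ).comap (Z k) ≤ mΩ :=
      fun k => (hZ k).comap_le
    have hm1 : m1 ≤ mΩ := iSup₂_le fun k _ => hle k
    have hm2 : m2 ≤ mΩ := iSup₂_le fun k _ => hle k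
    have hI : Indep m1 m2 μ := indep_iSup_of_disjoint hle hind (by simp)
    have hS1 : Measurable[m1] S := by
      refine stoppedWalk_meas Z a n m1 fun k hk => ?_
      exact Measurable.mono (comap_measurable (Z k))
        (le_iSup₂ (f := fun k (_ : k ∈ Set.Iio n) =>
          (inferInstance : MeasurableSpace ℝ).comap (Z k)) k hk) le_rfl
    have hZ2 : Measurable[m2] (Z n) := 
      Measurable.mono (comap_measurable (Z n))
        (le_iSup₂ (f := fun k (_ : k ∈ ({n} : Set ℕ)) =>
          (inferInstance : MeasurableSpace ℝ).comap (Z k)) n rfl) le_rfl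
    let F : ℝ → ℝ≥0∞ := (Set.Iio a).indicator fun s => ENNReal.ofReal (Real.exp s)
    let G : ℝ → ℝ≥0∞ := (Set.Ici a).indicator fun s => ENNReal.ofReal (Real.exp s)
    have hE : Measurable fun s : ℝ => ENNReal.ofReal (Real.exp s) := by fun_prop
    have hF : Measurable F := hE.indicator measurableSet_Iio
    have hG : Measurable G := hE.indicator measurableSet_Ici
    have hSm : Measurable[mΩ] S := hS1.mono hm1 le_rfl
    have key : ∀ ω, ENNReal.ofReal (Real.exp (stoppedWalk Z a (n+1) ω))
        = G (S ω) + F (S ω) * ENNReal.ofReal (Real.exp (Z n ω)) := by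
      intro ω
      by_cases h : S ω < a
      · simp [stoppedWalk, F, G, ← hS, h, Real.exp_add, ENNReal.ofReal_mul, Real.exp_nonneg]
      · simp [stoppedWalk, F, G, ← hS, h, not_lt.mp h]
    have key2 : ∀ ω, ENNReal.ofReal (Real.exp (S ω)) = G (S ω) + F (S ω) := by
      intro ω
      by_cases h : S ω < a
      · simp [F, G, h]
      · simp [F, G, h, not_lt.mp h]
    simp_rw [key]
    simp_rw [key2] at ih
    have hGS : Measurable[mΩ] fun ω => G (S ω) := hG.comp hSm
    rw [lintegral_add_left hGS] at ih ⊢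
    rw [lintegral_mul_eq_lintegral_mul_lintegral_of_independent_measurableSpace hm1 hm2 hI
      (f := fun ω => F (S ω)) (g := fun ω => ENNReal.ofReal (Real.exp (Z n ω)))
      (hF.comp hS1) (hE.comp hZ2), h1, mul_one, ih]

lemma ville {Ω : Type*} [mΩ : MeasurableSpace Ω] (μ : Measure Ω)
    [IsProbabilityMeasure μ] (Z : ℕ → Ω → ℝ) (hZ : ∀ n, Measurable (Z n))
    (hind : iIndepFun Z μ) (h1 : ∀ n, ∫⁻ ω, ENNReal.ofReal (Real.exp (Z n ω)) ∂μ = 1)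
    (a : ℝ) :
    μ {ω | ∃ n : ℕ, a ≤ ∑ m ∈ Finset.range n, Z m ω} ≤ ENNReal.ofReal (Real.exp (-a)) := by
  have hsub : {ω | ∃ n : ℕ, a ≤ ∑ m ∈ Finset.range n, Z m ω} ⊆
      ⋃ n, {ω | a ≤ stoppedWalk Z a n ω} := by
    rintro ω ⟨n, hn⟩
    refine Set.mem_iUnion.2 ⟨n, ?_⟩
    rcases stoppedWalk_dich Z a n ω with h | h
    · exact h
    · exact hn.trans_eq h.symm
  refine (measure_mono hsub).trans ?_
  rw [(stoppedWalk_mono Z a).measure_iUnion]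
  refine iSup_le fun n => ?_
  have hm := mul_meas_ge_le_lintegral (μ := μ)
    (f := fun ω => ENNReal.ofReal (Real.exp (stoppedWalk Z a n ω)))
    (by have := stoppedWalk_meas Z a n mΩ (fun k _ => hZ k); fun_prop)
    (ENNReal.ofReal (Real.exp a))
  rw [stoppedWalk_lintegral μ Z hZ hind h1 a n] at hm
  have hs : {ω | ENNReal.ofReal (Real.exp a) ≤ ENNReal.ofReal (Real.exp (stoppedWalk Z a n ω))}
      = {ω | a ≤ stoppedWalk Z a n ω} := by
    ext ω
    simp [ENNReal.ofReal_le_ofReal_iff (Real.exp_nonneg _)]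
  rw [hs] at hm
  calc μ {ω | a ≤ stoppedWalk Z a n ω}
      = ENNReal.ofReal (Real.exp (-a)) *
        (ENNReal.ofReal (Real.exp a) * μ {ω | a ≤ stoppedWalk Z a n ω}) := by
        rw [← mul_assoc, ← ENNReal.ofReal_mul (Real.exp_nonneg _), ← Real.exp_add]; simp
    _ ≤ ENNReal.ofReal (Real.exp (-a)) * 1 := by gcongr
    _ = _ := mul_one _

lemma llr_bound {Ω : Type*} [MeasurableSpace Ω] (P : Measure Ω)
    [IsProbabilityMeasure P] 
    {E : Type*} [mE : MeasurableSpace E] (ν : Measure E)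
    (f g : E → ℝ) (hf : Measurable f) (hg : Measurable g)
    (hfpos : ∀ᵐ t ∂ν, 0 < f t) (hgpos : ∀ᵐ t ∂ν, 0 < g t)
    (hgprob : ∫ t, g t ∂ν = 1)
    (X : ℕ → Ω → E) (hX : ∀ n, Measurable (X n))
    (hindep : iIndepFun (m := fun _ => mE) X P)
    (hdist : ∀ n, P.map (X n) = ν.withDensity fun t => ENNReal.ofReal (f t)) (a : ℝ) :
    P {ω | ∃ n : ℕ, a ≤ ∑ m ∈ Finset.range n, Real.log (g (X m ω) / f (X m ω))}
      ≤ ENNReal.ofReal (Real.exp (-a)) := by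
  have hL : Measurable fun t => Real.log (g t / f t) := Real.measurable_log.comp (hg.div hf)
  refine ville P (fun n ω => Real.log (g (X n ω) / f (X n ω))) (fun n => hL.comp (hX n))
    (hindep.comp (fun _ t => Real.log (g t / f t)) fun _ => hL) (fun n => ?_) a
  have hE : Measurable fun t => ENNReal.ofReal (Real.exp (Real.log (g t / f t))) := by fun_prop
  rw [← lintegral_map hE (hX n), hdist n,
    lintegral_withDensity_eq_lintegral_mul _ (by fun_prop) hE]
  have hint : Integrable g ν := by
    by_contra h
    rw [integral_undef h] at hgprob
    exact zero_ne_one hgprob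
  have h2 : ∫⁻ t, ENNReal.ofReal (g t) ∂ν = 1 := by
    rw [← ofReal_integral_eq_lintegral_ofReal hint (hgpos.mono fun t h => h.le), hgprob]; simp
  rw [← h2]
  refine lintegral_congr_ae ?_
  filter_upwards [hfpos, hgpos] with t h h'
  simp only [Pi.mul_apply]
  rw [← ENNReal.ofReal_mul h.le, Real.exp_log (div_pos h' h), mul_div_cancel₀ _ h.ne']

/-- Wald's error bounds for the SPRT with thresholds `a` and `-b`:
the probability under `Pf` (i.i.d. with density `f`) that the log-likelihood ratio
process exits `(-b, a)` for the first time through the upper boundary is at most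
`e^{-a}`, and the probability under `Pg` (i.i.d. with density `g`) that it exits for
the first time through the lower boundary is at most `e^{-b}`. The events below are
exactly `{T < ∞ ∧ λ(T) ≥ a}` and `{T < ∞ ∧ λ(T) ≤ -b}` for
`T = inf{n ≥ 1 : λ(n) ∉ (-b,a)}`. -/
theorem stmt_6
    {Ω : Type*} [MeasurableSpace Ω] (Pf Pg : Measure Ω)
    [IsProbabilityMeasure Pf] [IsProbabilityMeasure Pg]
    {E : Type*} [mE : MeasurableSpace E] (ν : Measure E) [SigmaFinite ν]
    (f g : E → ℝ) (hf : Measurable f) (hg : Measurable g)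
    (hfpos : ∀ᵐ t ∂ν, 0 < f t) (hgpos : ∀ᵐ t ∂ν, 0 < g t)
    (hfprob : ∫ t, f t ∂ν = 1) (hgprob : ∫ t, g t ∂ν = 1)
    (X : ℕ → Ω → E) (hX : ∀ n, Measurable (X n))
    (hindep_f : iIndepFun (m := fun _ => mE) X Pf)
    (hdist_f : ∀ n, Pf.map (X n) = ν.withDensity fun t => ENNReal.ofReal (f t))
    (hindep_g : iIndepFun (m := fun _ => mE) X Pg)
    (hdist_g : ∀ n, Pg.map (X n) = ν.withDensity fun t => ENNReal.ofReal (g t))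
    (a b : ℝ) (ha : 0 < a) (hb : 0 < b) :
    let lam : ℕ → Ω → ℝ := fun n ω =>
      ∑ m ∈ Finset.range n, Real.log (g (X m ω) / f (X m ω))
    Pf {ω | ∃ n : ℕ, 1 ≤ n ∧ (∀ m : ℕ, 1 ≤ m → m < n → lam m ω ∈ Set.Ioo (-b) a) ∧
          a ≤ lam n ω}
        ≤ ENNReal.ofReal (Real.exp (-a)) ∧
    Pg {ω | ∃ n : ℕ, 1 ≤ n ∧ (∀ m : ℕ, 1 ≤ m → m < n → lam m ω ∈ Set.Ioo (-b) a) ∧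
          lam n ω ≤ -b}
        ≤ ENNReal.ofReal (Real.exp (-b)) := by
  intro lam
  refine ⟨(measure_mono ?_).trans
    (llr_bound Pf ν f g hf hg hfpos hgpos hgprob X hX hindep_f hdist_f a),
    (measure_mono ?_).trans
    (llr_bound Pg ν g f hg hf hgpos hfpos hfprob X hX hindep_g hdist_g b)⟩
  · rintro ω ⟨n, _, _, h⟩
    exact ⟨n, h⟩
  · rintro ω ⟨n, _, _, h⟩
    refine ⟨n, ?_⟩
    have h3 : ∑ m ∈ Finset.range n, Real.log (f (X m ω) / g (X m ω)) = - lam n ω := by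
      simp only [lam, ← Finset.sum_neg_distrib]
      refine Finset.sum_congr rfl fun m _ => ?_
      rw [← Real.log_inv, inv_div]
    rw [h3]
    linarith
end

section
/- Let P and Q be probability measures on a measurable space with P absolutely continuous with respect to Q. Then for every measurable set Γ with 0 < P(Γ) < 1 and 0 < Q(Γ) < 1, the Kullback–Leibler divergence KL(P‖Q) := ∫ log(dP/dQ) dP ∈ [0,∞] satisfies KL(P‖Q) ≥ d(P(Γ), Q(Γᶜ)), where Γᶜ denotes the complement of Γ. -/
open MeasureTheory Classical
open scoped ENNReal

lemma aux_ineq (x c : ℝ) (hx : 0 ≤ x) (hc : 0 < c) :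
    x * (Real.log c + 1) - c ≤ x * Real.log x := by
  rcases hx.eq_or_lt with rfl | hx
  · simp; exact hc.le
  · have h := Real.log_le_sub_one_of_pos (div_pos hc hx)
    rw [Real.log_div hc.ne' hx.ne'] at h
    have h2 := mul_le_mul_of_nonneg_left h hx.le
    have h3 : x * (c / x - 1) = c - x := by field_simp
    linarith

lemma aux_set {Ω : Type*} [MeasurableSpace Ω] (P Q : Measure Ω)
    [IsProbabilityMeasure P] [IsProbabilityMeasure Q]
    (hPQ : P ≪ Q) (hi : Integrable (llr P Q) P)
    (s : Set Ω) (hs : MeasurableSet s) (h1 : 0 < P.real s) (h3 : 0 < Q.real s) :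
    P.real s * Real.log (P.real s / Q.real s) ≤ ∫ ω in s, llr P Q ω ∂P := by
  have hc : 0 < P.real s / Q.real s := div_pos h1 h3
  have e := setIntegral_rnDeriv_smul hPQ (f := llr P Q) hs
  rw [← e]
  have hf : Integrable (fun x => (P.rnDeriv Q x).toReal) Q := Measure.integrable_toReal_rnDeriv
  have hfl := (integrable_rnDeriv_smul_iff hPQ (f := llr P Q)).2 hi
  have key : ∫ x in s, ((P.rnDeriv Q x).toReal * (Real.log (P.real s / Q.real s) + 1)
      - P.real s / Q.real s) ∂Q ≤ ∫ x in s, (P.rnDeriv Q x).toReal • llr P Q x ∂Q := by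
    apply integral_mono
    · exact ((hf.mul_const _).sub (integrable_const _)).integrableOn
    · exact hfl.integrableOn
    · intro x
      exact aux_ineq _ _ ENNReal.toReal_nonneg hc
  rw [integral_sub (hf.mul_const _).integrableOn (integrable_const _), integral_mul_const,
    Measure.setIntegral_toReal_rnDeriv hPQ, setIntegral_const, smul_eq_mul] at key
  have : Q.real s * (P.real s / Q.real s) = P.real s := by field_simp
  linarith

/-- Information-theoretic lower bound: if `P ≪ Q` are probability measures and `Γ`
is a measurable event with `0 < P Γ < 1` and `0 < Q Γ < 1`, then the
Kullback–Leibler divergence `KL(P‖Q) = ∫ log(dP/dQ) dP ∈ [0,∞]` (equal to `+∞`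
when the log-likelihood ratio is not integrable) is at least
`d(P(Γ), Q(Γᶜ))`, where `d(x,y) = x log(x/(1-y)) + (1-x) log((1-x)/y)`. -/
theorem stmt_8
    {Ω : Type*} [MeasurableSpace Ω] (P Q : Measure Ω)
    [IsProbabilityMeasure P] [IsProbabilityMeasure Q]
    (hPQ : P ≪ Q)
    (Γ : Set Ω) (hΓ : MeasurableSet Γ)
    (h1 : 0 < P Γ) (h2 : P Γ < 1) (h3 : 0 < Q Γ) (h4 : Q Γ < 1) :
    let d : ℝ → ℝ → ℝ := fun x y =>
      x * Real.log (x / (1 - y)) + (1 - x) * Real.log ((1 - x) / y)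
    let KL : EReal :=
      if Integrable (llr P Q) P then ((∫ ω, llr P Q ω ∂P : ℝ) : EReal) else ⊤
    ((d (P Γ).toReal (Q Γᶜ).toReal : ℝ) : EReal) ≤ KL := by
  intro d KL
  have hp0 : 0 < P.real Γ := ENNReal.toReal_pos h1.ne' (measure_ne_top _ _)
  have hq0 : 0 < Q.real Γ := ENNReal.toReal_pos h3.ne' (measure_ne_top _ _)
  have hp1 : P.real Γ < 1 := by
    simpa [Measure.real] using (ENNReal.toReal_lt_toReal (measure_ne_top _ _) ENNReal.one_ne_top).2 h2
  have hq1 : Q.real Γ < 1 := by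
    simpa [Measure.real] using (ENNReal.toReal_lt_toReal (measure_ne_top _ _) ENNReal.one_ne_top).2 h4
  have hpc : P.real Γᶜ = 1 - P.real Γ := probReal_compl_eq_one_sub hΓ
  have hqc : Q.real Γᶜ = 1 - Q.real Γ := probReal_compl_eq_one_sub hΓ
  by_cases hi : Integrable (llr P Q) P
  · simp only [KL, if_pos hi, d]
    rw [EReal.coe_le_coe_iff]
    have a := aux_set P Q hPQ hi Γ hΓ hp0 hq0
    have b := aux_set P Q hPQ hi Γᶜ hΓ.compl (by linarith) (by linarith)
    rw [← integral_add_compl hΓ hi]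
    change P.real Γ * Real.log (P.real Γ / (1 - Q.real Γᶜ)) +
      (1 - P.real Γ) * Real.log ((1 - P.real Γ) / Q.real Γᶜ) ≤ _
    rw [← hpc, show 1 - Q.real Γᶜ = Q.real Γ by linarith]
    exact add_le_add a b
  · simp only [KL, if_neg hi]
    exact le_top
end

section
/- The function (x,y) ↦ d(x,y)/|log y| converges to 1 as x → 0⁺ and y → 0⁺; that is, the function (x,y) ↦ d(x,y)/(−log y) tends to 1 along the product of the filters of right-neighborhoods of 0 within (0,1) in each coordinate. -/
open Filter

/-- Asymptotics of `d(x,y) = x log(x/(1-y)) + (1-x) log((1-x)/y)`: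
`d(x,y)/(-log y) → 1` as `x → 0⁺` and `y → 0⁺` (along right-neighborhoods of `0`
within `(0,1)` in each coordinate). -/
theorem stmt_9 :
    Tendsto
      (fun p : ℝ × ℝ =>
        (p.1 * Real.log (p.1 / (1 - p.2)) + (1 - p.1) * Real.log ((1 - p.1) / p.2)) /
          (-Real.log p.2))
      ((nhdsWithin 0 (Set.Ioo 0 1)) ×ˢ (nhdsWithin 0 (Set.Ioo 0 1))) (nhds 1) := by
  have hle : (nhdsWithin (0:ℝ) (Set.Ioo 0 1)) ×ˢ (nhdsWithin (0:ℝ) (Set.Ioo 0 1))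
      ≤ nhds ((0:ℝ), (0:ℝ)) := by
    rw [nhds_prod_eq]
    exact Filter.prod_mono nhdsWithin_le_nhds nhdsWithin_le_nhds
  have hN : Tendsto (fun p : ℝ × ℝ => p.1 * Real.log p.1 - p.1 * Real.log (1 - p.2)
      + (1 - p.1) * Real.log (1 - p.1))
      ((nhdsWithin 0 (Set.Ioo 0 1)) ×ˢ (nhdsWithin 0 (Set.Ioo 0 1))) (nhds 0) := by
    have h : ContinuousAt (fun p : ℝ × ℝ => p.1 * Real.log p.1 - p.1 * Real.log (1 - p.2)
      + (1 - p.1) * Real.log (1 - p.1)) ((0:ℝ), (0:ℝ)) := by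
      have h1 : ContinuousAt (fun p : ℝ × ℝ => p.1 * Real.log p.1) ((0:ℝ), (0:ℝ)) :=
        (Real.continuous_mul_log.comp continuous_fst).continuousAt
      have h2 : ContinuousAt (fun p : ℝ × ℝ => Real.log (1 - p.2)) ((0:ℝ), (0:ℝ)) :=
        ContinuousAt.log (by fun_prop) (by simp)
      have h3 : ContinuousAt (fun p : ℝ × ℝ => (1 - p.1) * Real.log (1 - p.1))
          ((0:ℝ), (0:ℝ)) :=
        (Real.continuous_mul_log.comp (continuous_const.sub continuous_fst)).continuousAt
      exact (h1.sub (continuousAt_fst.mul h2)).add h3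
    have h' := h.tendsto.mono_left hle
    simpa using h'
  have hI : Tendsto (fun p : ℝ × ℝ => (-Real.log p.2)⁻¹)
      ((nhdsWithin 0 (Set.Ioo 0 1)) ×ˢ (nhdsWithin 0 (Set.Ioo 0 1))) (nhds 0) := by
    have h1 : Tendsto Real.log (nhdsWithin 0 (Set.Ioo 0 1)) atBot :=
      Real.tendsto_log_nhdsGT_zero.mono_left (nhdsWithin_mono _ Set.Ioo_subset_Ioi_self)
    exact (tendsto_inv_atTop_zero.comp (tendsto_neg_atBot_atTop.comp h1)).comp tendsto_snd
  have hX : Tendsto (fun p : ℝ × ℝ => 1 - p.1)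
      ((nhdsWithin 0 (Set.Ioo 0 1)) ×ˢ (nhdsWithin 0 (Set.Ioo 0 1))) (nhds 1) := by
    have h : ContinuousAt (fun p : ℝ × ℝ => 1 - p.1) ((0:ℝ), (0:ℝ)) := by fun_prop
    have h' := h.tendsto.mono_left hle
    simpa using h'
  have hT := (hN.mul hI).add hX
  rw [mul_zero, zero_add] at hT
  refine hT.congr' ?_
  filter_upwards [prod_mem_prod self_mem_nhdsWithin self_mem_nhdsWithin] with p hp
  obtain ⟨⟨hx0, hx1⟩, hy0, hy1⟩ := hp
  have hl : Real.log p.2 ≠ 0 := (Real.log_neg hy0 hy1).ne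
  rw [Real.log_div hx0.ne' (by linarith), Real.log_div (by linarith) hy0.ne']
  field_simp
  ring
end

section
/- Let x, x', y, y' ∈ (0,1) satisfy x + y < 1, x' ≤ x, and y' ≤ y. Then d(x', y') ≥ d(x, y); that is, on the region {(x,y) ∈ (0,1)² : x + y < 1}, the function d is non-increasing in each of its two arguments (and strictly decreasing when the corresponding argument strictly decreases). -/
lemma aux_log {a b : ℝ} (ha : 0 < a) (hb : 0 < b) :
    b * (Real.log a - Real.log b) ≤ a - b := by
  rw [← Real.log_div ha.ne' hb.ne']
  have h := Real.log_le_sub_one_of_pos (div_pos ha hb)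
  have h2 := mul_le_mul_of_nonneg_left h hb.le
  have h3 : b * (a / b - 1) = a - b := by field_simp
  linarith

lemma aux_x {x x' y : ℝ} (hx' : 0 < x') (hy : 0 < y) (hxy : x + y < 1) (h : x' < x) :
    x * Real.log (x / (1 - y)) + (1 - x) * Real.log ((1 - x) / y) <
    x' * Real.log (x' / (1 - y)) + (1 - x') * Real.log ((1 - x') / y) := by
  have h1 : 0 < x := by linarith
  have h2 : 0 < 1 - x := by linarith
  have h3 : 0 < 1 - x' := by linarith
  have h4 : 0 < 1 - y := by linarith
  rw [Real.log_div h1.ne' h4.ne', Real.log_div h2.ne' hy.ne', Real.log_div hx'.ne' h4.ne',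
    Real.log_div h3.ne' hy.ne']
  have k1 := aux_log h1 hx'
  have k2 := aux_log h2 h3
  have k3 : Real.log x < Real.log (1 - y) := Real.log_lt_log h1 (by linarith)
  have k4 : Real.log y < Real.log (1 - x) := Real.log_lt_log hy (by linarith)
  have k5 := mul_pos (sub_pos.2 h) (add_pos (sub_pos.2 k3) (sub_pos.2 k4))
  linarith

lemma aux_y {x y y' : ℝ} (hx : 0 < x) (hy' : 0 < y') (hxy : x + y < 1) (h : y' < y) :
    x * Real.log (x / (1 - y)) + (1 - x) * Real.log ((1 - x) / y) <
    x * Real.log (x / (1 - y')) + (1 - x) * Real.log ((1 - x) / y') := by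
  have h1 : 0 < y := by linarith
  have h2 : 0 < 1 - x := by linarith
  have h3 : 0 < 1 - y' := by linarith
  have h4 : 0 < 1 - y := by linarith
  rw [Real.log_div hx.ne' h4.ne', Real.log_div h2.ne' h1.ne', Real.log_div hx.ne' h3.ne',
    Real.log_div h2.ne' hy'.ne']
  have k1 := aux_log hy' h1
  have k2 := aux_log h3 h4
  have k3 : Real.log y' < Real.log y := Real.log_lt_log hy' h
  have k4 : Real.log (1 - y) < Real.log (1 - y') := Real.log_lt_log h4 (by linarith)
  have k5 := mul_pos (sub_pos.2 hxy) (sub_pos.2 k3)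
  have k6 := mul_pos (sub_pos.2 hxy) (sub_pos.2 k4)
  linarith

/-- Monotonicity of `d(x,y) = x log(x/(1-y)) + (1-x) log((1-x)/y)` on the region
`{(x,y) ∈ (0,1)² : x + y < 1}`: if `x' ≤ x` and `y' ≤ y` then `d(x',y') ≥ d(x,y)`,
with strict inequality if `x' < x` or `y' < y`. -/
theorem stmt_10 (x x' y y' : ℝ)
    (hx : x ∈ Set.Ioo (0 : ℝ) 1) (hx' : x' ∈ Set.Ioo (0 : ℝ) 1)
    (hy : y ∈ Set.Ioo (0 : ℝ) 1) (hy' : y' ∈ Set.Ioo (0 : ℝ) 1)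
    (hxy : x + y < 1) (hxx : x' ≤ x) (hyy : y' ≤ y) :
    let d : ℝ → ℝ → ℝ := fun u v =>
      u * Real.log (u / (1 - v)) + (1 - u) * Real.log ((1 - u) / v)
    d x y ≤ d x' y' ∧ ((x' < x ∨ y' < y) → d x y < d x' y') := by
  intro d
  have hX : x' < x → d x y < d x' y := fun h => aux_x hx'.1 hy.1 hxy h
  have hY : y' < y → d x' y < d x' y' := fun h => aux_y hx'.1 hy'.1 (by linarith) h
  clear_value d
  rcases hxx.eq_or_lt with rfl | h1 <;> rcases hyy.eq_or_lt with rfl | h2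
  · simp
  · exact ⟨(hY h2).le, fun _ => hY h2⟩
  · exact ⟨(hX h1).le, fun _ => hX h1⟩
  · exact ⟨((hX h1).trans (hY h2)).le, fun _ => (hX h1).trans (hY h2)⟩
end

section
/- Let ν be a σ-finite measure on a measurable space and let f and g be two ν-a.e. strictly positive probability densities with respect to ν such that I := ∫ g log(g/f) dν ∈ (0,∞). Let (X_n)_{n≥1} be i.i.d. random variables with natural filtration F = (F_n)_{n≥0}, and write P_g, E_g (resp. P_f) for probability and expectation when the common density is g (resp. f). Let T be an F-stopping time with P_f(T < ∞) = P_g(T < ∞) = 1 and E_g[T] < ∞, and let D be a {0,1}-valued random variable measurable with respect to the stopped σ-algebra F_T. If α, β ∈ (0,1) satisfy α + β < 1 and P_f(D = 1) ≤ α and P_g(D = 0) ≤ β, then E_g[T] ≥ d(β, α)/I. -/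
open MeasureTheory ProbabilityTheory
open scoped ENNReal BigOperators

lemma aux_com {Ω : Type*} [MeasurableSpace Ω] (Pf Pg : Measure Ω)
    [IsProbabilityMeasure Pf] [IsProbabilityMeasure Pg]
    {E : Type*} [mE : MeasurableSpace E] (r : E → ℝ≥0∞) (hr : Measurable r)
    (X : ℕ → Ω → E) (hX : ∀ n, Measurable (X n))
    (hf : iIndepFun (m := fun _ => mE) X Pf)
    (hg : iIndepFun (m := fun _ => mE) X Pg)
    (hd : ∀ n, Pf.map (X n) = (Pg.map (X n)).withDensity r) (n : ℕ) (A : Set Ω)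
    (hA : MeasurableSet[MeasurableSpace.comap (fun ω => fun i : Fin n => X i ω)
        MeasurableSpace.pi] A) :
    ∫⁻ ω in A, ∏ i ∈ Finset.range n, r (X i ω) ∂Pg = Pf A := by
  obtain ⟨B, hB, rfl⟩ := hA
  have hXn : Measurable (fun ω => fun i : Fin n => X i ω) := by fun_prop
  have key : (Pg.withDensity (fun ω => ∏ i ∈ Finset.range n, r (X i ω))).map
      (fun ω => fun i : Fin n => X i ω) = Pf.map (fun ω => fun i : Fin n => X i ω) := by
    have h1 : iIndepFun (m := fun _ => mE) (fun i : Fin n => X i) Pf :=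
      hf.precomp Fin.val_injective
    have h2 : iIndepFun (m := fun _ => mE) (fun i : Fin n => X i) Pg :=
      hg.precomp Fin.val_injective
    rw [iIndepFun.map_fun_eq_pi_map (f := fun i : Fin n => X i) (fun i => (hX i).aemeasurable) h1]
    have : ∀ i : Fin n, IsProbabilityMeasure (Pf.map (X i)) := fun i =>
      Measure.isProbabilityMeasure_map (hX i).aemeasurable
    symm
    apply Measure.pi_eq
    intro s hs
    have hms : MeasurableSet (Set.univ.pi s) := MeasurableSet.univ_pi hs
    rw [Measure.map_apply hXn hms, withDensity_apply _ (hXn hms),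
      ← lintegral_indicator (hXn hms)]
    have h3 : iIndepFun (fun (i : Fin n) ω => (s i).indicator r (X i ω)) Pg :=
      h2.comp (fun i => (s i).indicator r) (fun i => hr.indicator (hs i))
    have h4 := lintegral_prod_eq_prod_lintegral_of_indepFun Finset.univ _ h3
      (fun i => (hr.indicator (hs i)).comp (hX i))
    have h5 : ∀ i : Fin n, ∫⁻ ω, (s i).indicator r (X i ω) ∂Pg = Pf.map (X i) (s i) := by
      intro i
      rw [hd, withDensity_apply _ (hs i), ← lintegral_indicator (hs i),
        lintegral_map (hr.indicator (hs i)) (hX i)]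
    rw [← Finset.prod_congr rfl (fun i _ => h5 i), ← h4]
    congr 1
    ext ω
    by_cases h : ∀ i : Fin n, X i ω ∈ s i
    · rw [Set.indicator_of_mem (by simpa using h), Finset.prod_range]
      exact Finset.prod_congr rfl fun i _ => by rw [Set.indicator_of_mem (h i)]
    · rw [Set.indicator_of_notMem (by simpa using h)]
      push Not at h
      obtain ⟨i, hi⟩ := h
      symm
      exact Finset.prod_eq_zero (Finset.mem_univ i) (Set.indicator_of_notMem hi _)
  rw [← Measure.map_apply hXn hB, ← key, Measure.map_apply hXn hB,
    withDensity_apply _ (hXn hB)]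

lemma aux_mono {Ω E : Type*} [mE : MeasurableSpace E] (X : ℕ → Ω → E) {m n : ℕ} (h : m ≤ n) :
    MeasurableSpace.comap (fun ω => fun i : Fin m => X i ω) MeasurableSpace.pi ≤
    MeasurableSpace.comap (fun ω => fun i : Fin n => X i ω) MeasurableSpace.pi := by
  rintro _ ⟨B, hB, rfl⟩
  refine ⟨(fun (x : Fin n → E) (i : Fin m) => x (Fin.castLE h i)) ⁻¹' B, ?_, rfl⟩
  exact (by fun_prop : Measurable (fun (x : Fin n → E) (i : Fin m) => x (Fin.castLE h i))) hB

lemma aux_stop {Ω : Type*} [MeasurableSpace Ω] (Pf Pg : Measure Ω)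
    [IsProbabilityMeasure Pf] [IsProbabilityMeasure Pg]
    {E : Type*} [mE : MeasurableSpace E] (r : E → ℝ≥0∞) (hr : Measurable r)
    (X : ℕ → Ω → E) (hX : ∀ n, Measurable (X n))
    (hf : iIndepFun (m := fun _ => mE) X Pf)
    (hg : iIndepFun (m := fun _ => mE) X Pg)
    (hd : ∀ n, Pf.map (X n) = (Pg.map (X n)).withDensity r)
    (T : Ω → ℕ∞)  (A : Set Ω)
    (hA : ∀ n : ℕ, MeasurableSet[MeasurableSpace.comap (fun ω => fun i : Fin n => X i ω)
        MeasurableSpace.pi] (A ∩ {ω | T ω ≤ (n : ℕ∞)})) :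
    MeasurableSet (A ∩ {ω | T ω ≠ ⊤}) ∧
    ∫⁻ ω in A ∩ {ω | T ω ≠ ⊤}, ∏ i ∈ Finset.range (T ω).toNat, r (X i ω) ∂Pg
      = Pf (A ∩ {ω | T ω ≠ ⊤}) := by
  set B : ℕ → Set Ω := fun n => A ∩ {ω | T ω = (n : ℕ∞)} with hBdef
  have hB : ∀ n : ℕ, MeasurableSet[MeasurableSpace.comap (fun ω => fun i : Fin n => X i ω)
        MeasurableSpace.pi] (B n) := by
    intro n
    cases n with
    | zero =>
      have := hA 0
      simpa [hBdef] using this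
    | succ n =>
      have : B (n+1) = (A ∩ {ω | T ω ≤ ((n+1 : ℕ) : ℕ∞)}) \ (A ∩ {ω | T ω ≤ (n : ℕ∞)}) := by
        ext ω
        simp only [hBdef, Set.mem_inter_iff, Set.mem_ofPred_eq, Set.mem_sdiff]
        cases h : T ω with
        | top =>
          have h1 : ¬ (⊤ : ℕ∞) = ((n+1 : ℕ) : ℕ∞) := (ENat.natCast_ne_top _).symm
          have h2 : ¬ (⊤ : ℕ∞) ≤ ((n+1 : ℕ) : ℕ∞) := by
            rw [top_le_iff]; exact ENat.natCast_ne_top _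
          tauto
        | coe k =>
          norm_cast
          grind
      rw [this]
      exact (hA (n+1)).diff (aux_mono X (Nat.le_succ n) _ (hA n))
  have hB' : ∀ n, MeasurableSet (B n) := fun n =>
    (by fun_prop : Measurable (fun ω => fun i : Fin n => X i ω)).comap_le _ (hB n)
  have hU : A ∩ {ω | T ω ≠ ⊤} = ⋃ n, B n := by
    ext ω
    simp only [hBdef, Set.mem_inter_iff, Set.mem_ofPred_eq, Set.mem_iUnion, exists_and_left]
    refine and_congr_right fun _ => ?_
    rw [ENat.ne_top_iff_exists]
    exact ⟨fun ⟨n, h⟩ => ⟨n, h.symm⟩, fun ⟨n, h⟩ => ⟨n, h.symm⟩⟩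
  have hdis : Pairwise (Function.onFun Disjoint B) := by
    intro m n hmn
    refine Set.disjoint_left.2 fun ω h1 h2 => hmn ?_
    have := h1.2.symm.trans h2.2
    exact_mod_cast this
  rw [hU]
  refine ⟨MeasurableSet.iUnion hB', ?_⟩
  rw [lintegral_iUnion hB' hdis, measure_iUnion hdis hB']
  congr 1
  ext n
  rw [← aux_com Pf Pg r hr X hX hf hg hd n (B n) (hB n)]
  refine setLIntegral_congr_fun (hB' n) fun ω hω => ?_
  have : T ω = n := hω.2
  simp [this]

lemma aux_wald {Ω : Type*} [MeasurableSpace Ω] (P : Measure Ω) [IsProbabilityMeasure P]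
    {E : Type*} [mE : MeasurableSpace E] (μ : Measure E) (Z : E → ℝ) (hZ : Measurable Z)
    (hZi : Integrable Z μ)
    (X : ℕ → Ω → E) (hX : ∀ n, Measurable (X n))
    (hg : iIndepFun (m := fun _ => mE) X P) (hd : ∀ n, P.map (X n) = μ)
    (T : Ω → ℕ∞)
    (hT : ∀ n : ℕ,
      MeasurableSet[MeasurableSpace.comap (fun ω => fun i : Fin n => X i ω)
        MeasurableSpace.pi] {ω | T ω ≤ (n : ℕ∞)})
    (hTf : ∀ᵐ ω ∂P, T ω ≠ ⊤)
    (hTint : ∫⁻ ω, (T ω : ℝ≥0∞) ∂P ≠ ⊤) :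
    Integrable (fun ω => ∑ i ∈ Finset.range (T ω).toNat, Z (X i ω)) P ∧
    ∫ ω, ∑ i ∈ Finset.range (T ω).toNat, Z (X i ω) ∂P
      = (∫ t, Z t ∂μ) * (∫⁻ ω, (T ω : ℝ≥0∞) ∂P).toReal := by
  set C : ℕ → Set Ω := fun n => {ω | (n : ℕ∞) < T ω} with hC
  have hCc : ∀ n, C n = {ω | T ω ≤ (n : ℕ∞)}ᶜ := fun n => by ext; simp [hC]
  have hTm : ∀ n : ℕ, MeasurableSet {ω | T ω ≤ (n : ℕ∞)} := fun n =>
    (by fun_prop : Measurable (fun ω => fun i : Fin n => X i ω)).comap_le _ (hT n)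
  have hCm : ∀ n, MeasurableSet (C n) := fun n => by rw [hCc]; exact (hTm n).compl
  -- sum of tails
  have htail : ∑' n, P (C n) = ∫⁻ ω, (T ω : ℝ≥0∞) ∂P := by
    have : ∀ ω, (T ω : ℝ≥0∞) = ∑' n, (C n).indicator (fun _ => (1 : ℝ≥0∞)) ω := by
      intro ω
      cases h : T ω with
      | top =>
        have : ∀ n, (C n).indicator (fun _ => (1 : ℝ≥0∞)) ω = 1 := fun n => by simp [hC, h]
        simp only [this, ENat.toENNReal_top]
        exact (ENNReal.tsum_const_eq_top_of_ne_zero one_ne_zero).symm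
      | coe k =>
        rw [tsum_eq_sum (s := Finset.range k)]
        · rw [Finset.sum_congr rfl (g := fun _ => 1)]
          · simp
          · intro n hn
            simp [hC, h, Finset.mem_range.1 hn]
        · intro n hn
          simp only [Finset.mem_range, not_lt] at hn
          simp [hC, h, hn]
    simp_rw [this]
    rw [lintegral_tsum fun n => (measurable_const.indicator (hCm n)).aemeasurable]
    simp [lintegral_indicator, hCm]
  have hreal : HasSum (fun n => P.real (C n)) (∫⁻ ω, (T ω : ℝ≥0∞) ∂P).toReal := by
    have h := ENNReal.hasSum_toReal (f := fun n => P (C n)) (by rwa [htail])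
    rw [← ENNReal.tsum_toReal_eq (fun n => measure_ne_top _ _), htail] at h
    exact h
  -- independence
  have hind : ∀ (W : E → ℝ), Measurable W → ∀ n,
      IndepFun (fun ω => W (X n ω)) ((C n).indicator (fun _ => (1 : ℝ))) P := by
    intro W hW n
    have h0 := hg.indepFun_finset {n} (Finset.range n) (by simp) hX
    obtain ⟨B, hB, hBe⟩ := hT n
    have h1 := IndepFun.comp (_mγ' := Real.measurableSpace) h0 (φ := fun x : (({n} : Finset ℕ) → E) => W (x ⟨n, by simp⟩))
      (ψ := Set.indicator ((fun (x : Finset.range n → E) (i : Fin n) =>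
        x ⟨i, by simp⟩) ⁻¹' Bᶜ) (fun _ => (1 : ℝ))) (by fun_prop)
      (measurable_const.indicator
        ((by fun_prop : Measurable (fun (x : Finset.range n → E) (i : Fin n) =>
        x ⟨i, by simp⟩)) hB.compl))
    rw [hCc, ← hBe]
    convert h1 using 1
    · rfl
    · ext ω
      by_cases h : (fun i : Fin n => X i ω) ∈ B <;> simp [Set.indicator, h]
  have hintX : ∀ (W : E → ℝ), Measurable W → Integrable W μ → ∀ n,
      Integrable (fun ω => W (X n ω)) P ∧ ∫ ω, W (X n ω) ∂P = ∫ t, W t ∂μ := by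
    intro W hW hWi n
    refine ⟨?_, ?_⟩
    · rw [← hd n] at hWi
      exact hWi.comp_measurable (hX n)
    · rw [← hd n, integral_map (hX n).aemeasurable hW.aestronglyMeasurable]
  have hCi : ∀ n, Integrable ((C n).indicator (fun _ => (1 : ℝ))) P := fun n =>
    (integrable_const _).indicator (hCm n)
  have hint : ∀ (W : E → ℝ), Measurable W → Integrable W μ → ∀ n,
      Integrable (fun ω => W (X n ω) * (C n).indicator (fun _ => (1 : ℝ)) ω) P ∧
      ∫ ω, W (X n ω) * (C n).indicator (fun _ => (1 : ℝ)) ω ∂P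
        = (∫ t, W t ∂μ) * P.real (C n) := by
    intro W hW hWi n
    refine ⟨(hind W hW n).integrable_mul (hintX W hW hWi n).1 (hCi n), ?_⟩
    rw [(hind W hW n).integral_fun_mul_eq_mul_integral
      (hintX W hW hWi n).1.aestronglyMeasurable (hCi n).aestronglyMeasurable,
      (hintX W hW hWi n).2, integral_indicator_const _ (hCm n)]
    simp
  have hsumeq : ∀ (W : E → ℝ) ω, T ω ≠ ⊤ →
      HasSum (fun n => W (X n ω) * (C n).indicator (fun _ => (1 : ℝ)) ω)
      (∑ i ∈ Finset.range (T ω).toNat, W (X i ω)) := by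
    intro W ω h
    obtain ⟨k, hk⟩ := ENat.ne_top_iff_exists.1 h
    rw [← hk]
    simp only [ENat.toNat_natCast]
    rw [Finset.sum_congr rfl (g := fun n => W (X n ω) * (C n).indicator (fun _ => (1 : ℝ)) ω)]
    · apply hasSum_sum_of_ne_finset_zero
      intro n hn
      simp only [Finset.mem_range, not_lt] at hn
      simp [hC, ← hk, hn]
    · intro n hn
      simp [hC, ← hk, Finset.mem_range.1 hn]
  have hnorm : ∀ n ω, ‖Z (X n ω) * (C n).indicator (fun _ => (1 : ℝ)) ω‖
      = |Z (X n ω)| * (C n).indicator (fun _ => (1 : ℝ)) ω := by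
    intro n ω
    rw [Real.norm_eq_abs, abs_mul]
    congr 1
    exact abs_of_nonneg (Set.indicator_nonneg (fun _ _ => zero_le_one) _)
  have habs := hint (fun t => |Z t|) (by fun_prop) hZi.abs
  have hSum : Summable fun n => ∫ ω, ‖Z (X n ω) * (C n).indicator (fun _ => (1 : ℝ)) ω‖ ∂P := by
    simp_rw [hnorm, (habs _).2]
    exact hreal.summable.mul_left _
  have H := hasSum_integral_of_summable_integral_norm (fun n => (hint Z hZ hZi n).1) hSum
  have hae : (fun ω => ∑' n, Z (X n ω) * (C n).indicator (fun _ => (1 : ℝ)) ω) =ᵐ[P]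
      fun ω => ∑ i ∈ Finset.range (T ω).toNat, Z (X i ω) := by
    filter_upwards [hTf] with ω h using (hsumeq Z ω h).tsum_eq
  refine ⟨?_, ?_⟩
  · refine ⟨?_, ?_⟩
    · refine aestronglyMeasurable_of_tendsto_ae Filter.atTop
        (f := fun (m : ℕ) ω => ∑ n ∈ Finset.range m,
          Z (X n ω) * (C n).indicator (fun _ => (1 : ℝ)) ω) ?_ ?_
      · intro m
        exact (integrable_finsetSum _ fun n _ => (hint Z hZ hZi n).1).aestronglyMeasurable
      · filter_upwards [hTf] with ω h using (hsumeq Z ω h).tendsto_sum_nat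
    · have : ∫⁻ ω, ‖∑ i ∈ Finset.range (T ω).toNat, Z (X i ω)‖ₑ ∂P ≤
        ∫⁻ ω, ∑' n, ‖Z (X n ω) * (C n).indicator (fun _ => (1 : ℝ)) ω‖ₑ ∂P := by
        apply lintegral_mono_ae
        filter_upwards [hTf] with ω h
        rw [← (hsumeq Z ω h).tsum_eq]
        exact enorm_tsum_le_tsum_enorm
      refine lt_of_le_of_lt this ?_
      rw [lintegral_tsum fun n => (hint Z hZ hZi n).1.aestronglyMeasurable.enorm]
      simp_rw [← fun n => ofReal_integral_norm_eq_lintegral_enorm (hint Z hZ hZi n).1]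
      rw [← ENNReal.ofReal_tsum_of_nonneg (fun n => integral_nonneg fun _ => norm_nonneg _) hSum]
      exact ENNReal.ofReal_lt_top
  · rw [← integral_congr_ae hae]
    refine H.unique ?_
    simp_rw [(hint Z hZ hZi _).2]
    exact hreal.mul_left _

/-- Single-stream universal lower bound: any sequential test of `f` versus `g`,
given by a stopping time `T` (with respect to the natural filtration of the
observations, a.s. finite under both measures and integrable under `Pg`) and a
terminal `{0,1}`-valued decision `D` measurable with respect to the stopped
σ-algebra, with type-I error at most `α` and type-II error at most `β` where
`α + β < 1`, satisfies `E_g[T] ≥ d(β,α)/I`, where `I = ∫ g log(g/f) dν ∈ (0,∞)`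
and `d(x,y) = x log(x/(1-y)) + (1-x) log((1-x)/y)`. -/
theorem stmt_11
    {Ω : Type*} [MeasurableSpace Ω] (Pf Pg : Measure Ω)
    [IsProbabilityMeasure Pf] [IsProbabilityMeasure Pg]
    {E : Type*} [mE : MeasurableSpace E] (ν : Measure E) [SigmaFinite ν]
    (f g : E → ℝ) (hf : Measurable f) (hg : Measurable g)
    (hfpos : ∀ᵐ t ∂ν, 0 < f t) (hgpos : ∀ᵐ t ∂ν, 0 < g t)
    (hfprob : ∫ t, f t ∂ν = 1) (hgprob : ∫ t, g t ∂ν = 1)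
    (hI_int : Integrable (fun t => g t * Real.log (g t / f t)) ν)
    (hI_pos : 0 < ∫ t, g t * Real.log (g t / f t) ∂ν)
    (X : ℕ → Ω → E) (hX : ∀ n, Measurable (X n))
    (hindep_f : iIndepFun (m := fun _ => mE) X Pf)
    (hdist_f : ∀ n, Pf.map (X n) = ν.withDensity fun t => ENNReal.ofReal (f t))
    (hindep_g : iIndepFun (m := fun _ => mE) X Pg)
    (hdist_g : ∀ n, Pg.map (X n) = ν.withDensity fun t => ENNReal.ofReal (g t))
    (T : Ω → ℕ∞)
    (hT : ∀ n : ℕ,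
      MeasurableSet[MeasurableSpace.comap (fun ω => fun i : Fin n => X i ω)
        MeasurableSpace.pi] {ω | T ω ≤ (n : ℕ∞)})
    (hTf : Pf {ω | T ω ≠ ⊤} = 1) (hTg : Pg {ω | T ω ≠ ⊤} = 1)
    (hTint : ∫⁻ ω, (T ω : ℝ≥0∞) ∂Pg < ⊤)
    (D : Ω → ℕ) (hD01 : ∀ ω, D ω = 0 ∨ D ω = 1)
    (hD : ∀ n : ℕ,
      MeasurableSet[MeasurableSpace.comap (fun ω => fun i : Fin n => X i ω)
        MeasurableSpace.pi] ({ω | D ω = 1} ∩ {ω | T ω ≤ (n : ℕ∞)}))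
    (α β : ℝ) (hα : α ∈ Set.Ioo (0 : ℝ) 1) (hβ : β ∈ Set.Ioo (0 : ℝ) 1)
    (hαβ : α + β < 1)
    (herr1 : Pf {ω | D ω = 1} ≤ ENNReal.ofReal α)
    (herr2 : Pg {ω | D ω = 0} ≤ ENNReal.ofReal β) :
    ENNReal.ofReal
        ((β * Real.log (β / (1 - α)) + (1 - β) * Real.log ((1 - β) / α)) /
          ∫ t, g t * Real.log (g t / f t) ∂ν)
      ≤ ∫⁻ ω, (T ω : ℝ≥0∞) ∂Pg := by
  set I := ∫ t, g t * Real.log (g t / f t) ∂ν with hI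
  set Z : E → ℝ := fun t => Real.log (g t / f t) with hZdef
  have hZ : Measurable Z := by fun_prop
  set r : E → ℝ≥0∞ := fun t => ENNReal.ofReal (Real.exp (-Z t)) with hrdef
  have hr : Measurable r := by fun_prop
  set μg := ν.withDensity fun t => ENNReal.ofReal (g t) with hμg
  have hgm : Measurable fun t => ENNReal.ofReal (g t) := by fun_prop
  have hd : ∀ n, Pf.map (X n) = (Pg.map (X n)).withDensity r := by
    intro n
    rw [hdist_f, hdist_g, hμg, ← withDensity_mul ν hgm hr]
    apply withDensity_congr_ae
    filter_upwards [hfpos, hgpos] with t h1 h2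
    simp only [Pi.mul_apply, hrdef, hZdef]
    rw [← ENNReal.ofReal_mul h2.le, Real.exp_neg, Real.exp_log (by positivity)]
    congr 1
    field_simp
  have hZi : Integrable Z μg := by
    rw [hμg, integrable_withDensity_iff hgm (by simp)]
    refine hI_int.congr ?_
    filter_upwards [hgpos] with t h2
    rw [ENNReal.toReal_ofReal h2.le, mul_comm]
  have hZI : ∫ t, Z t ∂μg = I := by
    rw [hμg, integral_withDensity_eq_integral_toReal_smul hgm (by simp)]
    refine integral_congr_ae ?_
    filter_upwards [hgpos] with t h2
    rw [ENNReal.toReal_ofReal h2.le, smul_eq_mul]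
  have hTm : MeasurableSet {ω | T ω ≠ ⊤} := by
    have h := (aux_stop Pf Pg r hr X hX hindep_f hindep_g hd T Set.univ (by simpa using hT)).1
    simpa using h
  have hTga : ∀ᵐ ω ∂Pg, T ω ≠ ⊤ := (prob_compl_eq_zero_iff hTm).2 hTg
  have hTfa : ∀ᵐ ω ∂Pf, T ω ≠ ⊤ := (prob_compl_eq_zero_iff hTm).2 hTf
  obtain ⟨hSi, hSw⟩ := aux_wald Pg μg Z hZ hZi X hX hindep_g hdist_g T hT hTga hTint.ne
  have hD' : ∀ n : ℕ,
      MeasurableSet[MeasurableSpace.comap (fun ω => fun i : Fin n => X i ω)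
        MeasurableSpace.pi] ({ω | D ω = 0} ∩ {ω | T ω ≤ (n : ℕ∞)}) := by
    intro n
    have : {ω | D ω = 0} ∩ {ω | T ω ≤ (n : ℕ∞)} =
        {ω | T ω ≤ (n : ℕ∞)} \ ({ω | D ω = 1} ∩ {ω | T ω ≤ (n : ℕ∞)}) := by
      ext ω
      have := hD01 ω
      simp only [Set.mem_inter_iff, Set.mem_ofPred_eq, Set.mem_sdiff]
      grind
    rw [this]
    exact (hT n).diff (hD n)
  obtain ⟨hA1m, hA1⟩ := aux_stop Pf Pg r hr X hX hindep_f hindep_g hd T _ hD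
  obtain ⟨hA0m, hA0⟩ := aux_stop Pf Pg r hr X hX hindep_f hindep_g hd T _ hD'
  set A1 := {ω | D ω = 1} ∩ {ω | T ω ≠ ⊤} with hA1d
  set A0 := {ω | D ω = 0} ∩ {ω | T ω ≠ ⊤} with hA0d
  set S : Ω → ℝ := fun ω => ∑ i ∈ Finset.range (T ω).toNat, Z (X i ω) with hS
  have hW : ∀ ω, ∏ i ∈ Finset.range (T ω).toNat, r (X i ω) = ENNReal.ofReal (Real.exp (-S ω)) := by
    intro ω
    rw [hS, ← Finset.sum_neg_distrib, Real.exp_sum,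
      ENNReal.ofReal_prod_of_nonneg (fun _ _ => (Real.exp_pos _).le)]
  simp_rw [hW] at hA1 hA0
  have hWm : AEStronglyMeasurable (fun ω => Real.exp (-S ω)) Pg :=
    Real.continuous_exp.comp_aestronglyMeasurable hSi.aestronglyMeasurable.neg
  have hWA : ∀ A, ∫⁻ ω in A, ENNReal.ofReal (Real.exp (-S ω)) ∂Pg = Pf A →
      IntegrableOn (fun ω => Real.exp (-S ω)) A Pg ∧
      ∫ ω in A, Real.exp (-S ω) ∂Pg = Pf.real A := by
    intro A hA
    refine ⟨⟨hWm.restrict, ?_⟩, ?_⟩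
    · rw [hasFiniteIntegral_iff_ofReal (Filter.Eventually.of_forall fun _ => (Real.exp_pos _).le), hA]
      exact measure_lt_top _ _
    · rw [integral_eq_lintegral_of_nonneg_ae
        (Filter.Eventually.of_forall fun _ => (Real.exp_pos _).le) hWm.restrict, hA]
      rfl
  obtain ⟨hi1, he1⟩ := hWA A1 hA1
  obtain ⟨hi0, he0⟩ := hWA A0 hA0
  have hlow : ∀ A, MeasurableSet A → IntegrableOn (fun ω => Real.exp (-S ω)) A Pg →
      ∫ ω in A, Real.exp (-S ω) ∂Pg = Pf.real A → ∀ c : ℝ, 0 < c →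
      (1 + Real.log c) * Pg.real A - c * Pf.real A ≤ ∫ ω in A, S ω ∂Pg := by
    intro A hAm hi he c hc
    have : ∫ ω in A, ((1 + Real.log c) - c * Real.exp (-S ω)) ∂Pg
        = (1 + Real.log c) * Pg.real A - c * Pf.real A := by
      rw [integral_sub (integrable_const _) (hi.const_mul c), integral_const_mul, he]
      simp [mul_comm]
    rw [← this]
    refine setIntegral_mono ((integrable_const _).sub (hi.const_mul c)) hSi.integrableOn ?_
    intro ω
    have h := Real.add_one_le_exp (Real.log c - S ω)
    rw [sub_eq_add_neg, Real.exp_add, Real.exp_log hc] at h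
    simp only
    linarith
  have hdisj : Disjoint A0 A1 := by
    refine Set.disjoint_left.2 fun ω h0 h1 => ?_
    have h0 : D ω = 0 := h0.1
    have h1 : D ω = 1 := h1.1
    omega
  have hun : A0 ∪ A1 = {ω | T ω ≠ ⊤} := by
    ext ω
    have := hD01 ω
    simp only [hA0d, hA1d, Set.mem_union, Set.mem_inter_iff, Set.mem_ofPred_eq]
    tauto
  have hadd : ∀ P : Measure Ω, IsProbabilityMeasure P → P {ω | T ω ≠ ⊤} = 1 →
      P.real A0 + P.real A1 = 1 := by
    intro P _ hP
    rw [← measureReal_union hdisj hA1m, hun, measureReal_def, hP]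
    simp
  have haf := hadd Pf inferInstance hTf
  have hag := hadd Pg inferInstance hTg
  have hSsum : ∫ ω, S ω ∂Pg = ∫ ω in A0, S ω ∂Pg + ∫ ω in A1, S ω ∂Pg := by
    rw [← setIntegral_union hdisj hA1m hSi.integrableOn hSi.integrableOn, hun,
      Measure.restrict_eq_self_of_ae_mem (s := {ω | T ω ≠ ⊤}) hTga]
  have hq : Pf.real A1 ≤ α :=
    ENNReal.toReal_le_of_le_ofReal hα.1.le ((measure_mono Set.inter_subset_left).trans herr1)
  have hp : Pg.real A0 ≤ β :=
    ENNReal.toReal_le_of_le_ofReal hβ.1.le ((measure_mono Set.inter_subset_left).trans herr2)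
  obtain ⟨ha0, ha1⟩ := hα
  obtain ⟨hb0, hb1⟩ := hβ
  have hα' : 0 < 1 - α := by linarith
  have hβ' : 0 < 1 - β := by linarith
  have hl1 := hlow A1 hA1m hi1 he1 ((1 - β) / α) (by positivity)
  have hl0 := hlow A0 hA0m hi0 he0 (β / (1 - α)) (by positivity)
  have hc1 : 1 ≤ (1 - β) / α := by rw [le_div_iff₀ ha0]; linarith
  have hc0 : β / (1 - α) ≤ 1 := by rw [div_le_one hα']; linarith
  have hlc1 : 0 ≤ Real.log ((1 - β) / α) := Real.log_nonneg hc1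
  have hlc0 : Real.log (β / (1 - α)) ≤ 0 := Real.log_nonpos (by positivity) hc0
  have e1 : (1 - β) / α * α = 1 - β := by field_simp
  have e0 : β / (1 - α) * (1 - α) = β := by field_simp
  have hmain : β * Real.log (β / (1 - α)) + (1 - β) * Real.log ((1 - β) / α) ≤
      I * (∫⁻ ω, (T ω : ℝ≥0∞) ∂Pg).toReal := by
    rw [← hZI, ← hSw, hSsum]
    refine le_trans ?_ (add_le_add hl0 hl1)
    generalize (1 - β) / α = c1 at *
    generalize β / (1 - α) = c0 at *
    have hx : Pg.real A1 = 1 - Pg.real A0 := by linarith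
    have hy : Pf.real A0 = 1 - Pf.real A1 := by linarith
    rw [hx, hy]
    nlinarith [mul_nonneg (sub_nonneg.2 hp) (sub_nonneg.2 (hlc0.trans hlc1)),
      mul_nonneg (sub_nonneg.2 hq) (sub_nonneg.2 (hc0.trans hc1))]
  rw [← ENNReal.ofReal_toReal hTint.ne]
  apply ENNReal.ofReal_le_ofReal
  rw [div_le_iff₀ hI_pos]
  linarith
end

section
/- Let ν be a σ-finite measure on a measurable space and let f and g be two ν-a.e. strictly positive probability densities with respect to ν, and set I := ∫ g log(g/f) dν and J := ∫ f log(f/g) dν. Let (X_n)_{n≥1} be i.i.d. random variables, set λ(n) := ∑_{m=1}^n log(g(X_m)/f(X_m)), and for thresholds a, b > 0 define the SPRT stopping time T := inf{n ≥ 1 : λ(n) ∉ (−b, a)}. If I ∈ (0,∞), then E_g[T^r] < ∞ for every real r ≥ 1; if J ∈ (0,∞), then E_f[T^r] < ∞ for every real r ≥ 1. -/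
open MeasureTheory ProbabilityTheory
open scoped ENNReal BigOperators


lemma block_ind {Ω : Type*} [MeasurableSpace Ω] (P : Measure Ω) [IsProbabilityMeasure P]
    (Z : ℕ → Ω → ℝ) (hZ : ∀ n, Measurable (Z n)) (hi : iIndepFun Z P) (c p : ℝ)
    (hp0 : 0 < p) (hp1 : p < 1) (hp : ∀ n, ENNReal.ofReal p ≤ P {ω | c ≤ Z n ω}) (m k : ℕ) :
    MeasurableSet {ω | ∀ j < k, ∃ i ∈ Finset.Ico (j*m) ((j+1)*m), Z i ω < c} ∧
    P {ω | ∀ j < k, ∃ i ∈ Finset.Ico (j*m) ((j+1)*m), Z i ω < c} ≤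
      ENNReal.ofReal (1 - p^m) ^ k := by
  have hmeas : ∀ i, MeasurableSet {ω | Z i ω < c} := fun i => measurableSet_lt (hZ i) measurable_const
  have hA : ∀ j, MeasurableSet {ω | ∃ i ∈ Finset.Ico (j*m) ((j+1)*m), Z i ω < c} := by
    intro j
    have : {ω | ∃ i ∈ Finset.Ico (j*m) ((j+1)*m), Z i ω < c} =
      ⋃ i ∈ Finset.Ico (j*m) ((j+1)*m), {ω | Z i ω < c} := by ext; simp
    rw [this]
    exact Finset.measurableSet_biUnion _ fun i _ => hmeas i
  have hB : ∀ k, MeasurableSet {ω | ∀ j < k, ∃ i ∈ Finset.Ico (j*m) ((j+1)*m), Z i ω < c} := by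
    intro k
    have : {ω | ∀ j < k, ∃ i ∈ Finset.Ico (j*m) ((j+1)*m), Z i ω < c} =
      ⋂ j ∈ Finset.range k, {ω | ∃ i ∈ Finset.Ico (j*m) ((j+1)*m), Z i ω < c} := by ext; simp
    rw [this]
    exact Finset.measurableSet_biInter _ fun i _ => hA i
  refine ⟨hB k, ?_⟩
  have hPA : ∀ j, P {ω | ∃ i ∈ Finset.Ico (j*m) ((j+1)*m), Z i ω < c} ≤ ENNReal.ofReal (1 - p^m) := by
    intro j
    have h1 : {ω | ∃ i ∈ Finset.Ico (j*m) ((j+1)*m), Z i ω < c}ᶜ =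
      ⋂ i ∈ Finset.Ico (j*m) ((j+1)*m), Z i ⁻¹' (Set.Ici c) := by ext; simp
    have h2 := hi.measure_inter_preimage_eq_mul (Finset.Ico (j*m) ((j+1)*m))
      (sets := fun _ => Set.Ici c) (fun _ _ => measurableSet_Ici)
    have h3 : ENNReal.ofReal p ^ m ≤ P ({ω | ∃ i ∈ Finset.Ico (j*m) ((j+1)*m), Z i ω < c}ᶜ) := by
      rw [h1, h2]
      have : m = (Finset.Ico (j*m) ((j+1)*m)).card := by
        rw [Nat.card_Ico, add_mul, one_mul, Nat.add_sub_cancel_left]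
      conv_lhs => rw [this]
      rw [← Finset.prod_const]
      exact Finset.prod_le_prod' fun i _ => hp i
    have h4 := prob_compl_eq_one_sub (μ := P) (hA j).compl
    rw [compl_compl] at h4
    rw [h4, ENNReal.ofReal_sub _ (by positivity), ENNReal.ofReal_one, ENNReal.ofReal_pow hp0.le]
    exact tsub_le_tsub_left h3 _
  induction k with
  | zero => simp
  | succ k ih =>
    have hdis : Disjoint (Finset.range (k*m)) (Finset.Ico (k*m) ((k+1)*m)) := by
      rw [Finset.disjoint_left]; intro x; simp; omega
    have hind := hi.indepFun_finset _ _ hdis hZ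
    let U : Set (Finset.range (k*m) → ℝ) :=
      ⋂ j ∈ Finset.range k, ⋃ i : Finset.range (k*m), {z | i.1 ∈ Finset.Ico (j*m) ((j+1)*m) ∧ z i < c}
    let V : Set (Finset.Ico (k*m) ((k+1)*m) → ℝ) := ⋃ i, {z | z i < c}
    have hU : MeasurableSet U := by
      refine Finset.measurableSet_biInter _ fun j _ => MeasurableSet.iUnion fun i => ?_
      refine MeasurableSet.inter (MeasurableSet.const _) ?_
      exact measurableSet_lt (measurable_pi_apply i) measurable_const
    have hV : MeasurableSet V :=
      MeasurableSet.iUnion fun i => measurableSet_lt (measurable_pi_apply i) measurable_const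
    have e := hind.measure_inter_preimage_eq_mul U V hU hV
    have eU : (fun ω (i : Finset.range (k*m)) => Z i ω) ⁻¹' U =
        {ω | ∀ j < k, ∃ i ∈ Finset.Ico (j*m) ((j+1)*m), Z i ω < c} := by
      ext ω
      simp only [U, Set.mem_preimage, Set.mem_iInter, Set.mem_iUnion, Set.mem_setOf_eq, Finset.mem_range]
      refine forall₂_congr fun j hj => ⟨?_, ?_⟩
      · rintro ⟨i, h⟩; exact ⟨i, h⟩
      · rintro ⟨i, h, h'⟩
        refine ⟨⟨i, ?_⟩, h, h'⟩
        have : (j+1)*m ≤ k*m := Nat.mul_le_mul_right m hj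
        rw [Finset.mem_Ico] at h
        rw [Finset.mem_range]; omega
    have eV : (fun ω (i : Finset.Ico (k*m) ((k+1)*m)) => Z i ω) ⁻¹' V =
        {ω | ∃ i ∈ Finset.Ico (k*m) ((k+1)*m), Z i ω < c} := by
      ext ω
      simp [V]
    rw [eU, eV] at e
    have es : {ω | ∀ j < k+1, ∃ i ∈ Finset.Ico (j*m) ((j+1)*m), Z i ω < c} =
       {ω | ∀ j < k, ∃ i ∈ Finset.Ico (j*m) ((j+1)*m), Z i ω < c} ∩
       {ω | ∃ i ∈ Finset.Ico (k*m) ((k+1)*m), Z i ω < c} := by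
      ext ω
      simp only [Set.mem_inter_iff, Set.mem_setOf_eq]
      exact Nat.forall_lt_succ_right
    rw [es, e, pow_succ]
    exact mul_le_mul' ih (hPA k)

lemma sum_fin (q : ℝ) (hq0 : 0 < q) (hq1 : q < 1) (m : ℕ) (r : ℝ) :
    ∑' k : ℕ, (((k+1)*m : ℕ) : ℝ≥0∞) ^ (⌈r⌉₊) * ENNReal.ofReal q ^ k < ⊤ := by
  set N := ⌈r⌉₊
  have h := summable_pow_mul_geometric_of_norm_lt_one N (r := q)
    (by rw [Real.norm_eq_abs, abs_of_pos hq0]; exact hq1)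
  have h2 := (((summable_nat_add_iff 1).2 h).mul_left ((m:ℝ)^N)).mul_right q⁻¹
  have e : ∀ k : ℕ, (((k+1)*m : ℕ) : ℝ≥0∞) ^ N * ENNReal.ofReal q ^ k =
     ENNReal.ofReal ((m:ℝ)^N * (((k+1:ℕ):ℝ)^N * q^(k+1)) * q⁻¹) := by
    intro k
    have : (m:ℝ)^N * (((k+1:ℕ):ℝ)^N * q^(k+1)) * q⁻¹ = (((k+1)*m : ℕ) : ℝ)^N * q^k := by
      push_cast; field_simp; rw [mul_pow]; ring
    rw [this, ENNReal.ofReal_mul (by positivity), ENNReal.ofReal_pow (by positivity),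
      ENNReal.ofReal_pow hq0.le, ENNReal.ofReal_natCast]
  simp_rw [e]
  exact h2.tsum_ofReal_lt_top

lemma core {Ω : Type*} [MeasurableSpace Ω] (P : Measure Ω) [IsProbabilityMeasure P]
    (Z : ℕ → Ω → ℝ) (hZ : ∀ n, Measurable (Z n)) (hi : iIndepFun Z P) (c p : ℝ) (hc : 0 < c)
    (hp0 : 0 < p) (hp1 : p < 1) (hp : ∀ n, ENNReal.ofReal p ≤ P {ω | c ≤ Z n ω})
    (a b : ℝ) (ha : 0 < a) (hb : 0 < b) (r : ℝ) (hr : 1 ≤ r) :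
    ∫⁻ ω, (sInf {t : ℝ≥0∞ | ∃ n : ℕ, 1 ≤ n ∧ t = n ∧
        (∑ m ∈ Finset.range n, Z m ω) ∉ Set.Ioo (-b) a}) ^ r ∂P < ⊤ := by
  obtain ⟨m, hm⟩ := exists_nat_ge ((a+b)/c)
  rw [div_le_iff₀ hc] at hm
  have hm0 : 0 < m := by
    rcases Nat.eq_zero_or_pos m with h | h
    · subst h; simp at hm; linarith
    · exact h
  have hbl := fun k => block_ind P Z hZ hi c p hp0 hp1 hp m k
  set B : ℕ → Set Ω := fun k => {ω | ∀ j < k, ∃ i ∈ Finset.Ico (j*m) ((j+1)*m), Z i ω < c} with hBdef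
  set N := ⌈r⌉₊ with hN
  have key : ∀ ω, (sInf {t : ℝ≥0∞ | ∃ n : ℕ, 1 ≤ n ∧ t = n ∧
        (∑ m ∈ Finset.range n, Z m ω) ∉ Set.Ioo (-b) a}) ^ r ≤
      ∑' k : ℕ, (((k+1)*m : ℕ) : ℝ≥0∞) ^ N * (B k).indicator 1 ω := by
    intro ω
    by_cases hall : ∀ k, ω ∈ B k
    · have : ∑' k : ℕ, (((k+1)*m : ℕ) : ℝ≥0∞) ^ N * (B k).indicator 1 ω = ⊤ := by
        rw [eq_top_iff, ← ENNReal.tsum_const_eq_top_of_ne_zero (α := ℕ) one_ne_zero]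
        refine ENNReal.tsum_le_tsum fun k => ?_
        rw [Set.indicator_of_mem (hall k), Pi.one_apply, mul_one]
        apply one_le_pow₀
        have : 0 < (k+1)*m := by positivity
        exact_mod_cast this
      rw [this]; exact le_top
    · push Not at hall
      classical
      obtain ⟨K, hK⟩ : ∃ K, ω ∈ B K ∧ ω ∉ B (K+1) := by
        by_contra hcon
        push Not at hcon
        obtain ⟨k, hk⟩ := hall
        apply hk
        clear hk
        induction k with
        | zero => simp [hBdef]
        | succ k ih => exact hcon k ih
      refine le_trans ?_ (ENNReal.le_tsum K)
      rw [Set.indicator_of_mem hK.1, Pi.one_apply, mul_one]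
      have hgood : ∀ i ∈ Finset.Ico (K*m) ((K+1)*m), c ≤ Z i ω := by
        by_contra hcon
        push Not at hcon
        apply hK.2
        intro j hj
        rcases Nat.lt_succ_iff_lt_or_eq.1 hj with h | h
        · exact hK.1 j h
        · subst h; exact hcon
      have hle : K * m ≤ (K+1)*m := Nat.mul_le_mul_right m (Nat.le_succ K)
      have hsum : (∑ i ∈ Finset.range (K*m), Z i ω) + (a+b) ≤ ∑ i ∈ Finset.range ((K+1)*m), Z i ω := by
        rw [← Finset.sum_range_add_sum_Ico _ hle]
        have := Finset.card_nsmul_le_sum _ _ _ hgood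
        rw [Nat.card_Ico, add_mul, one_mul, Nat.add_sub_cancel_left, nsmul_eq_mul] at this
        rw [add_mul, one_mul]
        linarith
      have hpos : 1 ≤ (K+1)*m := by
        have : 0 < (K+1)*m := by positivity
        exact this
      have hT : sInf {t : ℝ≥0∞ | ∃ n : ℕ, 1 ≤ n ∧ t = n ∧
        (∑ m ∈ Finset.range n, Z m ω) ∉ Set.Ioo (-b) a} ≤ (((K+1)*m : ℕ) : ℝ≥0∞) := by
        by_cases h1 : (∑ i ∈ Finset.range ((K+1)*m), Z i ω) ∈ Set.Ioo (-b) a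
        · have h2 : (∑ i ∈ Finset.range (K*m), Z i ω) ∉ Set.Ioo (-b) a := by
            intro h2
            have := h1.2
            have := h2.1
            linarith
          have h3 : 1 ≤ K * m := by
            by_contra h3
            have : K * m = 0 := by omega
            rw [this] at h2
            apply h2
            simp [ha, hb]
          have h4 : ((K*m : ℕ) : ℝ≥0∞) ≤ (((K+1)*m : ℕ) : ℝ≥0∞) := Nat.cast_le.2 hle
          refine le_trans (sInf_le ?_) h4
          exact ⟨K*m, h3, rfl, h2⟩
        · exact sInf_le ⟨_, hpos, rfl, h1⟩
      calc _ ≤ (((K+1)*m : ℕ) : ℝ≥0∞) ^ r := ENNReal.rpow_le_rpow hT (by linarith)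
        _ ≤ (((K+1)*m : ℕ) : ℝ≥0∞) ^ (N:ℝ) :=
          ENNReal.rpow_le_rpow_of_exponent_le (by exact_mod_cast hpos) (Nat.le_ceil r)
        _ = _ := ENNReal.rpow_natCast _ _
  have hpm1 : p ^ m < 1 := pow_lt_one₀ hp0.le hp1 hm0.ne'
  have hpm0 : 0 < p ^ m := by positivity
  refine lt_of_le_of_lt (lintegral_mono key) ?_
  rw [lintegral_tsum fun k => ((measurable_one.indicator (hbl k).1).const_mul _).aemeasurable]
  refine lt_of_le_of_lt (ENNReal.tsum_le_tsum fun k => ?_)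
    (sum_fin (1 - p^m) (by linarith) (by linarith) m r)
  rw [lintegral_const_mul _ (measurable_one.indicator (hbl k).1), lintegral_indicator_one (hbl k).1]
  exact mul_le_mul_right (hbl k).2 _

lemma half {Ω : Type*} [MeasurableSpace Ω] (P : Measure Ω) [IsProbabilityMeasure P]
    {E : Type*} [MeasurableSpace E] (ν : Measure E) (g h : E → ℝ) (hg : Measurable g)
    (hh : Measurable h) (hgpos : ∀ᵐ t ∂ν, 0 < g t)
    (X : ℕ → Ω → E) (hX : ∀ n, Measurable (X n)) (hi : iIndepFun X P)
    (hd : ∀ n, P.map (X n) = ν.withDensity fun t => ENNReal.ofReal (g t))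
    (hI : 0 < ∫ t, g t * h t ∂ν)
    (a b : ℝ) (ha : 0 < a) (hb : 0 < b) (r : ℝ) (hr : 1 ≤ r) :
    ∫⁻ ω, (sInf {t : ℝ≥0∞ | ∃ n : ℕ, 1 ≤ n ∧ t = n ∧
        (∑ m ∈ Finset.range n, h (X m ω)) ∉ Set.Ioo (-b) a}) ^ r ∂P < ⊤ := by
  set μ := ν.withDensity fun t => ENNReal.ofReal (g t) with hμ
  obtain ⟨n, hn⟩ : ∃ n : ℕ, μ {t | 1 / ((n:ℝ)+1) ≤ h t} ≠ 0 := by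
    by_contra hcon
    push Not at hcon
    have h1 : ∀ᵐ t ∂μ, ∀ n : ℕ, ¬ (1 / ((n:ℝ)+1) ≤ h t) := by
      rw [ae_all_iff]; intro n; rw [ae_iff]; simpa using hcon n
    rw [hμ, ae_withDensity_iff hg.ennreal_ofReal] at h1
    refine absurd hI (not_lt.2 (integral_nonpos_of_ae ?_))
    filter_upwards [h1, hgpos] with t ht hgt
    have ht' := ht (by simpa using hgt)
    refine mul_nonpos_of_nonneg_of_nonpos hgt.le ?_
    by_contra hlt
    push Not at hlt
    obtain ⟨n, hn⟩ := exists_nat_one_div_lt hlt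
    exact ht' n hn.le
  have hPe : ∀ k, P {ω | 1 / ((n:ℝ)+1) ≤ h (X k ω)} = μ {t | 1 / ((n:ℝ)+1) ≤ h t} := by
    intro k
    rw [← hd k, Measure.map_apply (hX k) (measurableSet_le measurable_const hh)]
    rfl
  set x := μ {t | 1 / ((n:ℝ)+1) ≤ h t} with hx
  have hx1 : x ≤ 1 := by rw [← hPe 0]; exact prob_le_one
  have hxt : x ≠ ⊤ := ne_top_of_le_ne_top ENNReal.one_ne_top hx1
  have hxp : 0 < x.toReal := ENNReal.toReal_pos hn hxt
  have hx1' : x.toReal ≤ 1 := ENNReal.toReal_le_of_le_ofReal zero_le_one (by simpa using hx1)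
  refine core P (fun k ω => h (X k ω)) (fun k => hh.comp (hX k))
    (hi.comp (fun _ => h) (fun _ => hh)) (1 / ((n:ℝ)+1)) (x.toReal / 2) (by positivity)
    (by positivity) (by linarith) (fun k => ?_) a b ha hb r hr
  rw [hPe k]
  refine ENNReal.ofReal_le_of_le_toReal ?_
  linarith

/-- Finite moments of the SPRT stopping time `T = inf{n ≥ 1 : λ(n) ∉ (-b, a)}`
(an element of `[0,∞]`, with `inf ∅ = ∞`): if `I = ∫ g log(g/f) dν ∈ (0,∞)` then
`E_g[T^r] < ∞` for every `r ≥ 1`, and if `J = ∫ f log(f/g) dν ∈ (0,∞)` then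
`E_f[T^r] < ∞` for every `r ≥ 1`. -/
theorem stmt_15
    {Ω : Type*} [MeasurableSpace Ω] (Pf Pg : Measure Ω)
    [IsProbabilityMeasure Pf] [IsProbabilityMeasure Pg]
    {E : Type*} [mE : MeasurableSpace E] (ν : Measure E) [SigmaFinite ν]
    (f g : E → ℝ) (hf : Measurable f) (hg : Measurable g)
    (hfpos : ∀ᵐ t ∂ν, 0 < f t) (hgpos : ∀ᵐ t ∂ν, 0 < g t)
    (hfprob : ∫ t, f t ∂ν = 1) (hgprob : ∫ t, g t ∂ν = 1)
    (X : ℕ → Ω → E) (hX : ∀ n, Measurable (X n))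
    (hindep_f : iIndepFun X Pf)
    (hdist_f : ∀ n, Pf.map (X n) = ν.withDensity fun t => ENNReal.ofReal (f t))
    (hindep_g : iIndepFun X Pg)
    (hdist_g : ∀ n, Pg.map (X n) = ν.withDensity fun t => ENNReal.ofReal (g t))
    (a b : ℝ) (ha : 0 < a) (hb : 0 < b) :
    let T : Ω → ℝ≥0∞ := fun ω =>
      sInf {t : ℝ≥0∞ | ∃ n : ℕ, 1 ≤ n ∧ t = n ∧
        (∑ m ∈ Finset.range n, Real.log (g (X m ω) / f (X m ω))) ∉ Set.Ioo (-b) a}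
    ((Integrable (fun t => g t * Real.log (g t / f t)) ν ∧
        0 < ∫ t, g t * Real.log (g t / f t) ∂ν) →
      ∀ r : ℝ, 1 ≤ r → ∫⁻ ω, T ω ^ r ∂Pg < ⊤) ∧
    ((Integrable (fun t => f t * Real.log (f t / g t)) ν ∧
        0 < ∫ t, f t * Real.log (f t / g t) ∂ν) →
      ∀ r : ℝ, 1 ≤ r → ∫⁻ ω, T ω ^ r ∂Pf < ⊤) := by
  intro T
  refine ⟨fun hI r hr => ?_, fun hJ r hr => ?_⟩
  · exact half Pg ν g (fun t => Real.log (g t / f t)) hg (Real.measurable_log.comp (hg.div hf))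
      hgpos X hX hindep_g hdist_g hI.2 a b ha hb r hr
  · have h := half Pf ν f (fun t => Real.log (f t / g t)) hf (Real.measurable_log.comp (hf.div hg))
      hfpos X hX hindep_f hdist_f hJ.2 b a hb ha r hr
    convert h using 4 with ω
    simp only [T]
    congr 1
    ext t
    refine exists_congr fun n => and_congr_right fun _ => and_congr_right fun _ => ?_
    simp only [Set.mem_Ioo]
    have e : ∑ m ∈ Finset.range n, Real.log (f (X m ω) / g (X m ω)) =
        - ∑ m ∈ Finset.range n, Real.log (g (X m ω) / f (X m ω)) := by
      rw [← Finset.sum_neg_distrib]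
      refine Finset.sum_congr rfl fun m _ => ?_
      rw [← Real.log_inv, inv_div]
    rw [e]
    constructor <;> intro h1 h2 <;> apply h1 <;> constructor <;> linarith [h2.1, h2.2]
end
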